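/- There exists a universal constant c > 0 such that the following holds. For every n ≥ 1, every γ ∈ (0,1], and every amplitude vector f with characteristic distribution p and Weyl distribution q, if ∑_{x ∈ 𝔽₂^{2n}} q(x) · 2ⁿ · p(x) ≥ γ (i.e., the average of |⟨ψ|W_x|ψ⟩|² for x drawn from the Weyl distribution is at least γ), then there exists a Lagrangian subspace L ⊆ 𝔽₂^{2n} such that ∑_{x ∈ L} p(x) ≥ c·γ^{1089}. (The quantity ∑_{x ∈ L} p(x) is a lower bound on the squared fidelity of the state with some stabilizer state.) -/

import Mathlib

open Finset

/-- The characteristic distribution of an amplitude vector `f : 𝔽₂ⁿ → ℂ`. -/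
noncomputable def charDist (n : ℕ) (f : (Fin n → ZMod 2) → ℂ) :
    (Fin n → ZMod 2) × (Fin n → ZMod 2) → ℝ :=
  fun x =>
    ((2 : ℝ) ^ n)⁻¹ *
      ‖∑ y : Fin n → ZMod 2,
          f y * (starRingEnd ℂ) (f (y + x.1)) *
            (-1 : ℂ) ^ (∑ i, x.2 i * y i : ZMod 2).val‖ ^ 2

/-- The Weyl distribution `q(x) = ∑_y p(y)·p(x+y)`. -/
noncomputable def weylDist (n : ℕ) (f : (Fin n → ZMod 2) → ℂ) :
    (Fin n → ZMod 2) × (Fin n → ZMod 2) → ℝ :=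
  fun x => ∑ y : (Fin n → ZMod 2) × (Fin n → ZMod 2), charDist n f y * charDist n f (x + y)

/-- The symplectic product on `𝔽₂^{2n}`: `[x,y] = ⟨x₁,y₂⟩ + ⟨x₂,y₁⟩`. -/
def sympl (n : ℕ) (x y : (Fin n → ZMod 2) × (Fin n → ZMod 2)) : ZMod 2 :=
  (∑ i, x.1 i * y.2 i) + (∑ i, x.2 i * y.1 i)

/-- A Lagrangian subspace of `𝔽₂^{2n}`. -/
def IsLagrangian (n : ℕ)
    (L : Submodule (ZMod 2) ((Fin n → ZMod 2) × (Fin n → ZMod 2))) : Prop :=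
  Module.finrank (ZMod 2) L = n ∧ ∀ x ∈ L, ∀ y ∈ L, sympl n x y = 0

set_option linter.unusedSectionVars false
set_option linter.unusedVariables false

section EntBasics
open scoped Classical

noncomputable def law {Ω α : Type*} [Fintype Ω] (μ : Ω → ℝ) (X : Ω → α) (s : α) : ℝ :=
  ∑ ω, if X ω = s then μ ω else 0

def IsP {Ω : Type*} [Fintype Ω] (μ : Ω → ℝ) : Prop := (∀ ω, 0 ≤ μ ω) ∧ ∑ ω, μ ω = 1

noncomputable def ent {α : Type*} [Fintype α] (p : α → ℝ) : ℝ := ∑ s, Real.negMulLog (p s)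

noncomputable def Hh {Ω α : Type*} [Fintype Ω] [Fintype α] (μ : Ω → ℝ) (X : Ω → α) : ℝ :=
  ent (law μ X)

variable {Ω Ω' α β δ : Type*} [Fintype Ω] [Fintype Ω'] [Fintype α] [Fintype β] [Fintype δ]

theorem sum_law_mul (μ : Ω → ℝ) (X : Ω → α) (F : α → ℝ) :
    ∑ s, law μ X s * F s = ∑ ω, μ ω * F (X ω) := by
  unfold law
  simp_rw [Finset.sum_mul]
  rw [Finset.sum_comm]
  refine Finset.sum_congr rfl fun ω _ => ?_
  simp [ite_mul]

theorem law_nonneg {μ : Ω → ℝ} (h : IsP μ) (X : Ω → α) (s : α) : 0 ≤ law μ X s := by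
  unfold law
  refine Finset.sum_nonneg fun ω _ => ?_
  split_ifs
  · exact h.1 ω
  · exact le_rfl

theorem law_isP {μ : Ω → ℝ} (h : IsP μ) (X : Ω → α) : IsP (law μ X) := by
  refine ⟨law_nonneg h X, ?_⟩
  have := sum_law_mul μ X (fun _ => 1)
  simpa [h.2] using this

theorem law_law (μ : Ω → ℝ) (X : Ω → α) (f : α → β) :
    law (law μ X) f = law μ (fun ω => f (X ω)) := by
  funext b
  have := sum_law_mul μ X (fun a => if f a = b then 1 else 0)
  simpa [law] using this

theorem law_id (μ : Ω → ℝ) : law μ (fun ω => ω) = μ := by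
  funext s; simp [law]

theorem le_law {μ : Ω → ℝ} (h : IsP μ) (X : Ω → α) (ω : Ω) : μ ω ≤ law μ X (X ω) := by
  unfold law
  have := Finset.single_le_sum (f := fun ω' => if X ω' = X ω then μ ω' else 0)
    (fun ω' _ => by split_ifs; exacts [h.1 _, le_rfl]) (Finset.mem_univ ω)
  simpa using this

theorem law_pos {μ : Ω → ℝ} (h : IsP μ) (X : Ω → α) {ω : Ω} (hω : μ ω ≠ 0) :
    0 < law μ X (X ω) :=
  lt_of_lt_of_le (lt_of_le_of_ne (h.1 ω) (Ne.symm hω)) (le_law h X ω)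

theorem law_congr {μ : Ω → ℝ} {X Y : Ω → α} (h : ∀ ω, μ ω ≠ 0 → X ω = Y ω) :
    law μ X = law μ Y := by
  funext s
  unfold law
  refine Finset.sum_congr rfl fun ω _ => ?_
  by_cases h0 : μ ω = 0
  · simp [h0]
  · rw [h ω h0]

theorem Hh_eq_log (μ : Ω → ℝ) (X : Ω → α) :
    Hh μ X = - ∑ ω, μ ω * Real.log (law μ X (X ω)) := by
  have := sum_law_mul μ X (fun s => Real.log (law μ X s))
  rw [← this]
  simp [Hh, ent, Real.negMulLog]

theorem Hh_congr {μ : Ω → ℝ} {X : Ω → α} {Y : Ω → β}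
    (h : ∀ ω ω', μ ω ≠ 0 → μ ω' ≠ 0 → (X ω = X ω' ↔ Y ω = Y ω')) : Hh μ X = Hh μ Y := by
  rw [Hh_eq_log, Hh_eq_log]
  congr 1
  refine Finset.sum_congr rfl fun ω _ => ?_
  by_cases h0 : μ ω = 0
  · simp [h0]
  · congr 2
    unfold law
    refine Finset.sum_congr rfl fun ω' _ => ?_
    by_cases h1 : μ ω' = 0
    · simp [h1]
    · simp only [h ω' ω h1 h0]

theorem Hh_rename {μ : Ω → ℝ} {X : Ω → α} {Y : Ω → β} (f : α → β) (g : β → α)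
    (hf : ∀ ω, Y ω = f (X ω)) (hg : ∀ ω, X ω = g (Y ω)) : Hh μ X = Hh μ Y :=
  Hh_congr fun ω ω' _ _ => ⟨fun h => by rw [hf, hf, h], fun h => by rw [hg, hg, h]⟩

theorem Hh_law (μ : Ω → ℝ) (X : Ω → α) (f : α → β) :
    Hh (law μ X) f = Hh μ (fun ω => f (X ω)) := by
  unfold Hh; rw [law_law]

theorem Hh_equiv {μ : Ω → ℝ} {ν : Ω' → ℝ} (e : Ω ≃ Ω') (h : ∀ ω, ν (e ω) = μ ω)
    (X : Ω' → α) : Hh ν X = Hh μ (fun ω => X (e ω)) := by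
  unfold Hh
  congr 1
  funext s
  unfold law
  rw [← e.sum_comp]
  simp [h]

theorem law_marg_snd (μ : Ω → ℝ) (X : Ω → α) (Z : Ω → β) (z : β) :
    ∑ x, law μ (fun ω => (X ω, Z ω)) (x, z) = law μ Z z := by
  unfold law
  rw [Finset.sum_comm]
  refine Finset.sum_congr rfl fun ω _ => ?_
  by_cases h : Z ω = z <;> simp [h]

theorem law_le_snd {μ : Ω → ℝ} (h : IsP μ) (X : Ω → α) (Z : Ω → β) (x : α) (z : β) :
    law μ (fun ω => (X ω, Z ω)) (x, z) ≤ law μ Z z := by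
  rw [← law_marg_snd μ X Z z]
  exact Finset.single_le_sum (f := fun x => law μ (fun ω => (X ω, Z ω)) (x, z))
    (fun x _ => law_nonneg h _ _) (Finset.mem_univ x)

/-- submodularity -/
theorem submod {μ : Ω → ℝ} (h : IsP μ) (X : Ω → α) (Y : Ω → β) (Z : Ω → δ) :
    Hh μ (fun ω => (X ω, Y ω, Z ω)) + Hh μ Z ≤
      Hh μ (fun ω => (X ω, Z ω)) + Hh μ (fun ω => (Y ω, Z ω)) := by
  simp only [Hh_eq_log]
  set c := law μ (fun ω => (X ω, Y ω, Z ω)) with hc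
  set a := law μ (fun ω => (X ω, Z ω)) with ha
  set b := law μ (fun ω => (Y ω, Z ω)) with hb
  set d := law μ Z with hd
  have ha0 : ∀ s, 0 ≤ a s := law_nonneg h _
  have hb0 : ∀ s, 0 ≤ b s := law_nonneg h _
  have hc0 : ∀ s, 0 ≤ c s := law_nonneg h _
  have hd0 : ∀ s, 0 ≤ d s := law_nonneg h _
  have key : ∑ ω, μ ω * (a (X ω, Z ω) * b (Y ω, Z ω) / (c (X ω, Y ω, Z ω) * d (Z ω))) ≤ 1 := by
    have h1 := sum_law_mul μ (fun ω => (X ω, Y ω, Z ω))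
      (fun s => a (s.1, s.2.2) * b (s.2.1, s.2.2) / (c s * d s.2.2))
    rw [← h1, ← hc]
    calc ∑ s, c s * (a (s.1, s.2.2) * b (s.2.1, s.2.2) / (c s * d s.2.2))
        ≤ ∑ s : α × β × δ, a (s.1, s.2.2) * b (s.2.1, s.2.2) / d s.2.2 := by
          refine Finset.sum_le_sum fun s _ => ?_
          rcases eq_or_lt_of_le (hc0 s) with h0 | h0
          · rw [← h0, zero_mul]
            exact div_nonneg (mul_nonneg (ha0 _) (hb0 _)) (hd0 _)
          · apply le_of_eq
            rw [mul_div_assoc', mul_div_mul_left _ _ h0.ne']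
      _ = ∑ z, d z * d z / d z := by
          rw [Fintype.sum_prod_type]
          simp_rw [Fintype.sum_prod_type]
          rw [Finset.sum_congr rfl fun x _ => Finset.sum_comm, Finset.sum_comm]
          refine Finset.sum_congr rfl fun z _ => ?_
          simp_rw [← Finset.sum_div, ← Finset.mul_sum, ← Finset.sum_mul]
          rw [ha, hb, law_marg_snd, law_marg_snd]
      _ ≤ ∑ z, d z := by
          refine Finset.sum_le_sum fun z _ => ?_
          rw [mul_self_div_self]
      _ = 1 := (law_isP h Z).2
  have pt : ∀ ω, μ ω * (Real.log (a (X ω, Z ω)) + Real.log (b (Y ω, Z ω))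
      - Real.log (c (X ω, Y ω, Z ω)) - Real.log (d (Z ω))) ≤
      μ ω * (a (X ω, Z ω) * b (Y ω, Z ω) / (c (X ω, Y ω, Z ω) * d (Z ω))) - μ ω := by
    intro ω
    by_cases h0 : μ ω = 0
    · simp [h0]
    have a1 : 0 < a (X ω, Z ω) := law_pos h (fun ω => (X ω, Z ω)) h0
    have b1 : 0 < b (Y ω, Z ω) := law_pos h (fun ω => (Y ω, Z ω)) h0
    have c1 : 0 < c (X ω, Y ω, Z ω) := law_pos h (fun ω => (X ω, Y ω, Z ω)) h0
    have d1 : 0 < d (Z ω) := law_pos h Z h0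
    have := Real.log_le_sub_one_of_pos (div_pos (mul_pos a1 b1) (mul_pos c1 d1))
    rw [Real.log_div (mul_pos a1 b1).ne' (mul_pos c1 d1).ne', Real.log_mul a1.ne' b1.ne',
      Real.log_mul c1.ne' d1.ne'] at this
    have := mul_le_mul_of_nonneg_left this (h.1 ω)
    linarith
  have := Finset.sum_le_sum fun ω (_ : ω ∈ Finset.univ) => pt ω
  simp only [mul_sub, mul_add, Finset.sum_sub_distrib, Finset.sum_add_distrib, h.2] at this
  linarith

def CI (μ : Ω → ℝ) (X : Ω → α) (Y : Ω → β) (Z : Ω → δ) : Prop :=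
  ∀ x y z, law μ (fun ω => (X ω, Y ω, Z ω)) (x, y, z) * law μ Z z =
    law μ (fun ω => (X ω, Z ω)) (x, z) * law μ (fun ω => (Y ω, Z ω)) (y, z)

theorem CI.ent_eq {μ : Ω → ℝ} (h : IsP μ) {X : Ω → α} {Y : Ω → β} {Z : Ω → δ}
    (hCI : CI μ X Y Z) :
    Hh μ (fun ω => (X ω, Y ω, Z ω)) + Hh μ Z =
      Hh μ (fun ω => (X ω, Z ω)) + Hh μ (fun ω => (Y ω, Z ω)) := by
  simp only [Hh_eq_log]
  rw [← neg_add, ← neg_add, ← Finset.sum_add_distrib, ← Finset.sum_add_distrib]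
  congr 1
  refine Finset.sum_congr rfl fun ω _ => ?_
  by_cases h0 : μ ω = 0
  · simp [h0]
  have a1 := law_pos h (fun ω => (X ω, Z ω)) h0
  have b1 := law_pos h (fun ω => (Y ω, Z ω)) h0
  have c1 := law_pos h (fun ω => (X ω, Y ω, Z ω)) h0
  have d1 := law_pos h Z h0
  rw [← mul_add, ← mul_add, ← Real.log_mul c1.ne' d1.ne', ← Real.log_mul a1.ne' b1.ne', hCI]

theorem Hh_unit {μ : Ω → ℝ} (h : IsP μ) : Hh μ (fun _ => ()) = 0 := by
  simp [Hh, ent, law, h.2]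

theorem Hh_snd_le {μ : Ω → ℝ} (h : IsP μ) (X : Ω → α) (Z : Ω → β) :
    Hh μ Z ≤ Hh μ (fun ω => (X ω, Z ω)) := by
  have h1 := submod h X X Z
  have h2 : Hh μ (fun ω => (X ω, X ω, Z ω)) = Hh μ (fun ω => (X ω, Z ω)) :=
    Hh_rename (fun s => (s.1, s.2.2)) (fun s => (s.1, s.1, s.2)) (fun _ => rfl) (fun _ => rfl)
  linarith

theorem Hh_comp_le {μ : Ω → ℝ} (h : IsP μ) (X : Ω → α) (f : α → β) :
    Hh μ (fun ω => f (X ω)) ≤ Hh μ X := by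
  have h1 := Hh_snd_le h X (fun ω => f (X ω))
  have h2 : Hh μ (fun ω => (X ω, f (X ω))) = Hh μ X :=
    Hh_rename (fun s => s.1) (fun s => (s, f s)) (fun _ => rfl) (fun _ => rfl)
  linarith

theorem Hh_pair_le {μ : Ω → ℝ} (h : IsP μ) (X : Ω → α) (Y : Ω → β) :
    Hh μ (fun ω => (X ω, Y ω)) ≤ Hh μ X + Hh μ Y := by
  have h1 := submod h X Y (fun _ => ())
  rw [Hh_unit h] at h1
  have h2 : Hh μ (fun ω => (X ω, Y ω, ())) = Hh μ (fun ω => (X ω, Y ω)) :=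
    Hh_rename (fun s => (s.1, s.2.1)) (fun s => (s.1, s.2, ())) (fun _ => rfl) (fun _ => rfl)
  have h3 : Hh μ (fun ω => (X ω, ())) = Hh μ X :=
    Hh_rename (fun s => s.1) (fun s => (s, ())) (fun _ => rfl) (fun _ => rfl)
  have h4 : Hh μ (fun ω => (Y ω, ())) = Hh μ Y :=
    Hh_rename (fun s => s.1) (fun s => (s, ())) (fun _ => rfl) (fun _ => rfl)
  linarith

/-! products -/

def pr (μ : Ω → ℝ) (ν : Ω' → ℝ) : Ω × Ω' → ℝ := fun ω => μ ω.1 * ν ω.2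

theorem pr_isP {μ : Ω → ℝ} {ν : Ω' → ℝ} (h : IsP μ) (h' : IsP ν) : IsP (pr μ ν) := by
  refine ⟨fun ω => mul_nonneg (h.1 _) (h'.1 _), ?_⟩
  simp only [pr, Fintype.sum_prod_type, ← Finset.mul_sum, h'.2, mul_one, h.2]

theorem law_pr (μ : Ω → ℝ) (ν : Ω' → ℝ) (X : Ω → α) (Y : Ω' → β) :
    law (pr μ ν) (fun ω => (X ω.1, Y ω.2)) = pr (law μ X) (law ν Y) := by
  funext s
  obtain ⟨x, y⟩ := s
  simp only [law, pr, Fintype.sum_prod_type, Finset.sum_mul_sum]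
  refine Finset.sum_congr rfl fun i _ => Finset.sum_congr rfl fun j _ => ?_
  by_cases h1 : X i = x <;> by_cases h2 : Y j = y <;> simp [h1, h2]

theorem law_pr_fst (μ : Ω → ℝ) {ν : Ω' → ℝ} (h' : IsP ν) (X : Ω → α) :
    law (pr μ ν) (fun ω => X ω.1) = law μ X := by
  funext x
  simp only [law, pr, Fintype.sum_prod_type]
  refine Finset.sum_congr rfl fun i _ => ?_
  by_cases h1 : X i = x <;> simp [h1, ← Finset.mul_sum, h'.2]

theorem law_pr_snd {μ : Ω → ℝ} (h : IsP μ) (ν : Ω' → ℝ) (X : Ω' → α) :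
    law (pr μ ν) (fun ω => X ω.2) = law ν X := by
  funext x
  simp only [law, pr, Fintype.sum_prod_type]
  rw [Finset.sum_comm]
  refine Finset.sum_congr rfl fun i _ => ?_
  by_cases h1 : X i = x <;> simp [h1, ← Finset.sum_mul, h.2]

theorem Hh_pr {μ : Ω → ℝ} {ν : Ω' → ℝ} (h : IsP μ) (h' : IsP ν) (X : Ω → α) (Y : Ω' → β) :
    Hh (pr μ ν) (fun ω => (X ω.1, Y ω.2)) = Hh μ X + Hh ν Y := by
  have hP := pr_isP h h'
  have hci : CI (pr μ ν) (fun ω => X ω.1) (fun ω => Y ω.2) (fun _ => ()) := by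
    intro x y z
    have e1 : law (pr μ ν) (fun ω => (X ω.1, Y ω.2, ())) (x, y, z) = law μ X x * law ν Y y := by
      have := congrFun (law_pr μ ν X Y) (x, y)
      rw [show law μ X x * law ν Y y = pr (law μ X) (law ν Y) (x, y) from rfl, ← this]
      simp [law]
    have e2 : law (pr μ ν) (fun ω => (X ω.1, ())) (x, z) = law μ X x := by
      rw [← law_pr_fst μ h' X]; simp [law]
    have e3 : law (pr μ ν) (fun ω => (Y ω.2, ())) (y, z) = law ν Y y := by
      rw [← law_pr_snd h ν Y]; simp [law]
    have e4 : law (pr μ ν) (fun _ => ()) z = 1 := by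
      simp [law, hP.2]
    rw [e1, e2, e3, e4, mul_one]
  have h1 := hci.ent_eq hP
  rw [Hh_unit hP] at h1
  have h2 : Hh (pr μ ν) (fun ω => (X ω.1, Y ω.2, ())) = Hh (pr μ ν) (fun ω => (X ω.1, Y ω.2)) :=
    Hh_rename (fun s => (s.1, s.2.1)) (fun s => (s.1, s.2, ())) (fun _ => rfl) (fun _ => rfl)
  have h3 : Hh (pr μ ν) (fun ω => (X ω.1, ())) = Hh μ X := by
    rw [show Hh μ X = Hh (pr μ ν) (fun ω => X ω.1) by unfold Hh; rw [law_pr_fst μ h' X]]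
    exact Hh_rename (fun s => s.1) (fun s => (s, ())) (fun _ => rfl) (fun _ => rfl)
  have h4 : Hh (pr μ ν) (fun ω => (Y ω.2, ())) = Hh ν Y := by
    rw [show Hh ν Y = Hh (pr μ ν) (fun ω => Y ω.2) by unfold Hh; rw [law_pr_snd h ν Y]]
    exact Hh_rename (fun s => s.1) (fun s => (s, ())) (fun _ => rfl) (fun _ => rfl)
  linarith

theorem Hh_pr_fst (μ : Ω → ℝ) {ν : Ω' → ℝ} (h' : IsP ν) (X : Ω → α) :
    Hh (pr μ ν) (fun ω => X ω.1) = Hh μ X := by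
  unfold Hh; rw [law_pr_fst μ h' X]

theorem Hh_pr_snd {μ : Ω → ℝ} (h : IsP μ) (ν : Ω' → ℝ) (X : Ω' → α) :
    Hh (pr μ ν) (fun ω => X ω.2) = Hh ν X := by
  unfold Hh; rw [law_pr_snd h ν X]

/-- conditional independence on a product space -/
theorem CI_pr {α' β' : Type*} [Fintype α'] [Fintype β'] {μ : Ω → ℝ} {ν : Ω' → ℝ}
    (h : IsP μ) (h' : IsP ν)
    (X : Ω → α) (Y : Ω' → β) (C : Ω → α') (D : Ω' → β') :
    CI (pr μ ν) (fun ω => X ω.1) (fun ω => Y ω.2) (fun ω => (C ω.1, D ω.2)) := by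
  rintro x y ⟨c, d⟩
  have e1 : law (pr μ ν) (fun ω => (X ω.1, Y ω.2, (C ω.1, D ω.2))) (x, y, (c, d)) =
      law μ (fun ω => (X ω, C ω)) (x, c) * law ν (fun ω => (Y ω, D ω)) (y, d) := by
    have := congrFun (law_pr μ ν (fun ω => (X ω, C ω)) (fun ω => (Y ω, D ω))) ((x, c), (y, d))
    refine Eq.trans ?_ this
    unfold law
    refine Finset.sum_congr rfl fun ω _ => ?_
    congr 1
    simp only [Prod.mk.injEq, eq_iff_iff]
    tauto
  have e2 : law (pr μ ν) (fun ω => (X ω.1, (C ω.1, D ω.2))) (x, (c, d)) =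
      law μ (fun ω => (X ω, C ω)) (x, c) * law ν D d := by
    have := congrFun (law_pr μ ν (fun ω => (X ω, C ω)) D) ((x, c), d)
    refine Eq.trans ?_ this
    unfold law
    refine Finset.sum_congr rfl fun ω _ => ?_
    congr 1
    simp only [Prod.mk.injEq, eq_iff_iff]
    tauto
  have e3 : law (pr μ ν) (fun ω => (Y ω.2, (C ω.1, D ω.2))) (y, (c, d)) =
      law μ C c * law ν (fun ω => (Y ω, D ω)) (y, d) := by
    have := congrFun (law_pr μ ν C (fun ω => (Y ω, D ω))) (c, (y, d))
    refine Eq.trans ?_ this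
    unfold law
    refine Finset.sum_congr rfl fun ω _ => ?_
    congr 1
    simp only [Prod.mk.injEq, eq_iff_iff]
    tauto
  have e4 := congrFun (law_pr μ ν C D) (c, d)
  rw [e1, e2, e3, e4]
  simp only [pr]
  ring

/-! conditional laws -/

noncomputable def cl (μ : Ω → ℝ) (T : Ω → α) (C : Ω → β) (c : β) : α → ℝ :=
  fun t => law μ (fun ω => (T ω, C ω)) (t, c) / law μ C c

theorem cl_isP {μ : Ω → ℝ} (h : IsP μ) (T : Ω → α) (C : Ω → β) {c : β} (hc : law μ C c ≠ 0) :
    IsP (cl μ T C c) := by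
  refine ⟨fun t => div_nonneg (law_nonneg h _ _) (law_nonneg h _ _), ?_⟩
  simp only [cl]
  rw [← Finset.sum_div, law_marg_snd, div_self hc]

theorem sum_ent_cl {μ : Ω → ℝ} (h : IsP μ) (T : Ω → α) (C : Ω → β) :
    ∑ c, law μ C c * ent (cl μ T C c) = Hh μ (fun ω => (T ω, C ω)) - Hh μ C := by
  have e : ∀ c, law μ C c * ent (cl μ T C c) =
      ∑ t, Real.negMulLog (law μ (fun ω => (T ω, C ω)) (t, c)) - Real.negMulLog (law μ C c) := by
    intro c
    by_cases hc : law μ C c = 0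
    · have : ∀ t, law μ (fun ω => (T ω, C ω)) (t, c) = 0 := fun t =>
        le_antisymm (hc ▸ law_le_snd h T C t c) (law_nonneg h _ _)
      simp [hc, this]
    · have e1 : Real.negMulLog (law μ C c) =
          ∑ t, law μ (fun ω => (T ω, C ω)) (t, c) * (-Real.log (law μ C c)) := by
        rw [← Finset.sum_mul, law_marg_snd, Real.negMulLog]; ring
      rw [e1, ← Finset.sum_sub_distrib, ent, Finset.mul_sum]
      refine Finset.sum_congr rfl fun t _ => ?_
      by_cases ht : law μ (fun ω => (T ω, C ω)) (t, c) = 0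
      · simp [cl, ht]
      · rw [cl, Real.negMulLog, Real.negMulLog, Real.log_div ht hc]
        field_simp
        ring
  simp_rw [e]
  rw [Finset.sum_sub_distrib, Finset.sum_comm]
  unfold Hh ent
  rw [Fintype.sum_prod_type]

theorem ent_concave {w : β → ℝ} (hw : IsP w) {q : β → α → ℝ}
    (hq : ∀ c, w c ≠ 0 → ∀ a, 0 ≤ q c a) :
    ∑ c, w c * ent (q c) ≤ ent (fun a => ∑ c, w c * q c a) := by
  unfold ent
  simp_rw [Finset.mul_sum]
  rw [Finset.sum_comm]
  refine Finset.sum_le_sum fun a _ => ?_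
  have := Real.concaveOn_negMulLog.le_map_sum (t := Finset.univ) (w := w)
    (p := fun c => if w c = 0 then 0 else q c a) (fun c _ => hw.1 c) hw.2
    (fun c _ => by
      by_cases hc : w c = 0
      · simp [hc]
      · simpa [hc] using hq c hc a)
  simp only [smul_eq_mul] at this
  refine le_trans (le_of_eq ?_) (le_trans this (le_of_eq ?_))
  · refine Finset.sum_congr rfl fun c _ => ?_
    by_cases hc : w c = 0 <;> simp [hc]
  · congr 1
    refine Finset.sum_congr rfl fun c _ => ?_
    by_cases hc : w c = 0 <;> simp [hc]

end EntBasics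

section Conv
open scoped Classical
variable {Ω Ω' α β δ : Type*} [Fintype Ω] [Fintype Ω'] [Fintype α] [Fintype β] [Fintype δ]
variable {G : Type*} [AddCommGroup G] [Module (ZMod 2) G] [Fintype G]

theorem c2 {G : Type*} [AddCommGroup G] [Module (ZMod 2) G] (x : G) : x + x = 0 :=
  ZModModule.add_self x

noncomputable def conv (x y : G → ℝ) : G → ℝ := law (pr x y) (fun ω => ω.1 + ω.2)

noncomputable def rd (x y : G → ℝ) : ℝ := ent (conv x y) - ent x / 2 - ent y / 2

theorem conv_isP {x y : G → ℝ} (hx : IsP x) (hy : IsP y) : IsP (conv x y) :=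
  law_isP (pr_isP hx hy) _

theorem ent_eq_Hh (x : α → ℝ) : ent x = Hh x (fun ω => ω) := by
  unfold Hh; rw [law_id]

theorem Hh_conv (μ : Ω → ℝ) (ν : Ω' → ℝ) (X : Ω → G) (Y : Ω' → G) :
    ent (conv (law μ X) (law ν Y)) = Hh (pr μ ν) (fun ω => X ω.1 + Y ω.2) := by
  unfold Hh conv
  rw [← law_pr, law_law]

theorem ent_conv (x y : G → ℝ) : ent (conv x y) = Hh (pr x y) (fun ω => ω.1 + ω.2) := rfl

theorem conv_comm (x y : G → ℝ) : conv x y = conv y x := by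
  funext s
  unfold conv law
  rw [← (Equiv.prodComm G G).sum_comp]
  refine Finset.sum_congr rfl fun ω _ => ?_
  simp [pr, add_comm, mul_comm]

theorem conv_apply (x y : G → ℝ) (w : G) : conv x y w = ∑ b, y b * x (w + b) := by
  unfold conv law
  rw [Fintype.sum_prod_type, Finset.sum_comm]
  refine Finset.sum_congr rfl fun b _ => ?_
  rw [Finset.sum_eq_single (w + b)]
  · have : w + b + b = w := by rw [add_assoc, c2, add_zero]
    simp [pr, this, mul_comm]
  · intro a _ ha
    have : ¬ (a + b = w) := fun h => ha (by rw [← h, add_assoc, c2, add_zero])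
    simp [this]
  · simp

theorem ent_le_conv {x y : G → ℝ} (hx : IsP x) (hy : IsP y) : ent x ≤ ent (conv x y) := by
  have hP := pr_isP hx hy
  have h1 := Hh_pair_le hP (fun ω => ω.1 + ω.2) (fun ω => ω.2)
  have h2 : Hh (pr x y) (fun ω => (ω.1 + ω.2, ω.2)) = Hh (pr x y) (fun ω => (ω.1, ω.2)) :=
    Hh_rename (fun s => (s.1 - s.2, s.2)) (fun s => (s.1 + s.2, s.2)) (by simp) (by simp)
  have h3 := Hh_pr hx hy (fun ω => ω) (fun ω => ω)
  have h4 := Hh_pr_snd hx y (fun ω => ω)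
  rw [ent_conv, ent_eq_Hh]
  linarith

theorem rd_nonneg {x y : G → ℝ} (hx : IsP x) (hy : IsP y) : 0 ≤ rd x y := by
  have h1 := ent_le_conv hx hy
  have h2 := ent_le_conv hy hx
  rw [conv_comm] at h2
  unfold rd; linarith

/-- `H(z+x+y) ≤ H(z+x) + H(x+y) - H(x)`. -/
theorem madiman {z x y : G → ℝ} (hz : IsP z) (hx : IsP x) (hy : IsP y) :
    ent (conv z (conv x y)) ≤ ent (conv z x) + ent (conv x y) - ent x := by
  have hxy := pr_isP hx hy
  have hP := pr_isP hz hxy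
  set M := pr z (pr x y)
  have h1 := submod hP (fun ω => ω.1) (fun ω => ω.2.2) (fun ω => ω.1 + (ω.2.1 + ω.2.2))
  have e0 : ent (conv z (conv x y)) = Hh M (fun ω => ω.1 + (ω.2.1 + ω.2.2)) := by
    have := Hh_conv z (pr x y) (fun ω => ω) (fun ω => ω.1 + ω.2)
    rw [law_id] at this
    exact this
  have e1 : Hh M (fun ω => (ω.1, ω.2.2, ω.1 + (ω.2.1 + ω.2.2))) = ent z + ent x + ent y := by
    have h := Hh_pr hz hxy (fun ω => ω) (fun ω => (ω.1, ω.2))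
    have h' := Hh_pr hx hy (fun ω => ω) (fun ω => ω)
    rw [ent_eq_Hh z, ent_eq_Hh x, ent_eq_Hh y, add_assoc, ← h', ← h]
    refine Hh_rename (fun s => (s.1, (s.2.2 - s.1 - s.2.1, s.2.1)))
      (fun s => (s.1, s.2.2, s.1 + (s.2.1 + s.2.2))) ?_ ?_
    · intro ω; simp
    · intro ω; simp
  have e2 : Hh M (fun ω => (ω.1, ω.1 + (ω.2.1 + ω.2.2))) = ent z + ent (conv x y) := by
    have h := Hh_pr hz hxy (fun ω => ω) (fun ω => ω.1 + ω.2)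
    rw [ent_eq_Hh z, ent_conv, ← h]
    exact Hh_rename (fun s => (s.1, s.2 - s.1)) (fun s => (s.1, s.1 + s.2)) (by simp) (by simp)
  have e3 : Hh M (fun ω => (ω.2.2, ω.1 + (ω.2.1 + ω.2.2))) ≤ ent y + ent (conv z x) := by
    have h : Hh M (fun ω => (ω.2.2, ω.1 + (ω.2.1 + ω.2.2))) =
        Hh M (fun ω => (ω.2.2, ω.1 + ω.2.1)) :=
      Hh_rename (fun s => (s.1, s.2 - s.1)) (fun s => (s.1, s.2 + s.1))
        (fun ω => by simp [← add_assoc]) (fun ω => by simp [← add_assoc])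
    have h1 := Hh_pair_le hP (fun ω => ω.2.2) (fun ω => ω.1 + ω.2.1)
    have h2 : Hh M (fun ω => ω.2.2) = ent y := by
      have := Hh_pr_snd hz (pr x y) (fun ω => ω.2)
      rw [this, Hh_pr_snd hx y (fun ω => ω), ent_eq_Hh]
    have h3 : Hh M (fun ω => ω.1 + ω.2.1) = ent (conv z x) := by
      have := Hh_conv z (pr x y) (fun ω => ω) (fun ω => ω.1)
      rw [law_id, law_pr_fst x hy (fun ω => ω), law_id] at this
      exact this.symm
    linarith
  linarith

theorem cl_map (μ : Ω → ℝ) (T : Ω → α) (C : Ω → β) (c : β) (f : α → δ) :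
    law (cl μ T C c) f = cl μ (fun ω => f (T ω)) C c := by
  funext b
  have h := congrFun (law_law μ (fun ω => (T ω, C ω)) (fun s => (f s.1, s.2))) (b, c)
  unfold cl
  dsimp only at h
  rw [← h]
  unfold law
  simp only [Fintype.sum_prod_type]
  rw [Finset.sum_div]
  refine Finset.sum_congr rfl fun t _ => ?_
  by_cases hb : f t = b <;> simp [hb]

theorem cl_conv {μ : Ω → ℝ} {T₁ T₂ : Ω → G} {C : Ω → β} (hCI : CI μ T₁ T₂ C) {c : β}
    (hc : law μ C c ≠ 0) :
    conv (cl μ T₁ C c) (cl μ T₂ C c) = cl μ (fun ω => T₁ ω + T₂ ω) C c := by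
  have : pr (cl μ T₁ C c) (cl μ T₂ C c) = cl μ (fun ω => (T₁ ω, T₂ ω)) C c := by
    funext s
    obtain ⟨x, y⟩ := s
    have h := hCI x y c
    have e : law μ (fun ω => ((T₁ ω, T₂ ω), C ω)) ((x, y), c) =
        law μ (fun ω => (T₁ ω, T₂ ω, C ω)) (x, y, c) := by
      unfold law
      refine Finset.sum_congr rfl fun ω _ => ?_
      congr 1
      simp only [Prod.mk.injEq, and_assoc]
    simp only [pr, cl, e]
    field_simp
    linarith
  unfold conv
  rw [this]
  exact cl_map μ (fun ω => (T₁ ω, T₂ ω)) C c (fun s => s.1 + s.2)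

theorem law_eq_sum_cl {μ : Ω → ℝ} (h : IsP μ) (T : Ω → α) (C : Ω → β) (t : α) :
    law μ T t = ∑ c, law μ C c * cl μ T C c t := by
  have e : ∀ c, law μ C c * cl μ T C c t = law μ (fun ω => (T ω, C ω)) (t, c) := by
    intro c
    by_cases hc : law μ C c = 0
    · have := le_antisymm (hc ▸ law_le_snd h T C t c) (law_nonneg h _ _)
      rw [hc, this, zero_mul]
    · rw [cl]; field_simp
  simp_rw [e]
  unfold law
  rw [Finset.sum_comm]
  refine Finset.sum_congr rfl fun ω _ => ?_
  by_cases hb : T ω = t <;> simp [hb]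

theorem conv_concave {μ : Ω → ℝ} (h : IsP μ) {z : G → ℝ} (hz : IsP z) (T : Ω → G) (C : Ω → β) :
    ∑ c, law μ C c * ent (conv z (cl μ T C c)) ≤ ent (conv z (law μ T)) := by
  have h1 := ent_concave (law_isP h C) (q := fun c => conv z (cl μ T C c))
    (fun c hc a => (conv_isP hz (cl_isP h T C hc)).1 a)
  refine h1.trans (le_of_eq ?_)
  congr 1
  funext w
  simp_rw [conv_comm z, conv_apply, law_eq_sum_cl h T C, Finset.mul_sum]
  rw [Finset.sum_comm]
  refine Finset.sum_congr rfl fun b _ => Finset.sum_congr rfl fun c _ => ?_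
  ring

theorem cond_min {m η : ℝ} (hη : 0 ≤ η) {z : G → ℝ} (hz : IsP z)
    (hmin : ∀ a b : G → ℝ, IsP a → IsP b → m ≤ rd a b + η * (rd z a + rd z b))
    {μ : Ω → ℝ} (h : IsP μ) {T₁ T₂ : Ω → G} {C : Ω → β} (hCI : CI μ T₁ T₂ C) :
    m ≤ (Hh μ (fun ω => (T₁ ω + T₂ ω, C ω)) - Hh μ C)
      - (Hh μ (fun ω => (T₁ ω, C ω)) - Hh μ C) / 2 - (Hh μ (fun ω => (T₂ ω, C ω)) - Hh μ C) / 2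
      + η * (ent (conv z (law μ T₁)) + ent (conv z (law μ T₂)) - ent z
        - (Hh μ (fun ω => (T₁ ω, C ω)) - Hh μ C) / 2
        - (Hh μ (fun ω => (T₂ ω, C ω)) - Hh μ C) / 2) := by
  have hw := law_isP h C
  have k1 : ∑ c, law μ C c * m ≤ ∑ c, law μ C c *
      (rd (cl μ T₁ C c) (cl μ T₂ C c) + η * (rd z (cl μ T₁ C c) + rd z (cl μ T₂ C c))) := by
    refine Finset.sum_le_sum fun c _ => ?_
    by_cases hc : law μ C c = 0
    · simp [hc]
    · exact mul_le_mul_of_nonneg_left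
        (hmin _ _ (cl_isP h T₁ C hc) (cl_isP h T₂ C hc)) (hw.1 c)
  rw [← Finset.sum_mul, hw.2, one_mul] at k1
  have k2 : ∑ c, law μ C c *
      (rd (cl μ T₁ C c) (cl μ T₂ C c) + η * (rd z (cl μ T₁ C c) + rd z (cl μ T₂ C c))) =
      ∑ c, law μ C c * ent (conv (cl μ T₁ C c) (cl μ T₂ C c))
      - (∑ c, law μ C c * ent (cl μ T₁ C c)) / 2 - (∑ c, law μ C c * ent (cl μ T₂ C c)) / 2
      + η * (∑ c, law μ C c * ent (conv z (cl μ T₁ C c))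
        + ∑ c, law μ C c * ent (conv z (cl μ T₂ C c)) - (∑ c, law μ C c) * ent z
      - (∑ c, law μ C c * ent (cl μ T₁ C c)) / 2 - (∑ c, law μ C c * ent (cl μ T₂ C c)) / 2) := by
    simp only [Finset.sum_div, Finset.sum_mul, ← Finset.sum_sub_distrib, ← Finset.sum_add_distrib,
      Finset.mul_sum]
    refine Finset.sum_congr rfl fun c _ => ?_
    unfold rd
    ring
  have k3 : ∑ c, law μ C c * ent (conv (cl μ T₁ C c) (cl μ T₂ C c)) =
      ∑ c, law μ C c * ent (cl μ (fun ω => T₁ ω + T₂ ω) C c) := by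
    refine Finset.sum_congr rfl fun c _ => ?_
    by_cases hc : law μ C c = 0
    · simp [hc]
    · rw [cl_conv hCI hc]
  rw [k2, k3, sum_ent_cl h, sum_ent_cl h, sum_ent_cl h, hw.2, one_mul] at k1
  refine k1.trans ?_
  have k4 := conv_concave h hz T₁ C
  have k5 := conv_concave h hz T₂ C
  gcongr

/-! conditionally independent copies -/

noncomputable def cc (μ : Ω → ℝ) (C : Ω → β) : Ω × Ω → ℝ := fun ω =>
  if C ω.1 = C ω.2 then μ ω.1 * μ ω.2 / law μ C (C ω.1) else 0

theorem cc_symm (μ : Ω → ℝ) (C : Ω → β) (ω : Ω × Ω) : cc μ C ω.swap = cc μ C ω := by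
  unfold cc
  by_cases h : C ω.1 = C ω.2
  · simp [h, mul_comm]
  · simp [h, Ne.symm h]

theorem cc_supp {μ : Ω → ℝ} {C : Ω → β} {ω : Ω × Ω} (h : cc μ C ω ≠ 0) : C ω.1 = C ω.2 := by
  by_contra h'
  simp [cc, h'] at h

theorem cc_law {μ : Ω → ℝ} (h : IsP μ) (C : Ω → β) (X : Ω → α) (Y : Ω → δ) (x : α) (y : δ) (c : β) :
    law (cc μ C) (fun ω => (X ω.1, Y ω.2, C ω.1)) (x, y, c) =
      law μ (fun ω => (X ω, C ω)) (x, c) * law μ (fun ω => (Y ω, C ω)) (y, c) / law μ C c := by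
  conv_rhs => unfold law
  rw [Finset.sum_mul_sum, Finset.sum_div]
  conv_lhs => unfold law
  rw [Fintype.sum_prod_type]
  refine Finset.sum_congr rfl fun i _ => ?_
  rw [Finset.sum_div]
  refine Finset.sum_congr rfl fun j _ => ?_
  simp only [Prod.mk.injEq, cc]
  by_cases h1 : X i = x
  · by_cases h2 : Y j = y
    · by_cases h3 : C i = c
      · by_cases h4 : C j = c
        · simp only [h1, h2, h3, h4]
          simp [law]
        · simp [h1, h2, h3, h4, Ne.symm h4]
      · simp [h3]
    · simp [h2]
  · simp [h1]

theorem cc_law_fst {μ : Ω → ℝ} (h : IsP μ) (C : Ω → β) (X : Ω → α) :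
    law (cc μ C) (fun ω => X ω.1) = law μ X := by
  funext x
  unfold law
  rw [Fintype.sum_prod_type]
  refine Finset.sum_congr rfl fun i _ => ?_
  by_cases h1 : X i = x
  · simp only [h1, if_true, cc]
    have e : ∀ j, (if C i = C j then μ i * μ j / law μ C (C i) else 0) =
        (if C j = C i then μ j else 0) * (μ i / law μ C (C i)) := by
      intro j
      by_cases h4 : C i = C j
      · simp only [h4, if_true]; ring
      · simp [h4, Ne.symm h4]
    simp_rw [e]
    rw [← Finset.sum_mul]
    change law μ C (C i) * _ = _
    by_cases h0 : μ i = 0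
    · simp [h0]
    · have := (law_pos h C h0).ne'
      field_simp
  · simp [h1]

theorem cc_law_snd {μ : Ω → ℝ} (h : IsP μ) (C : Ω → β) (X : Ω → α) :
    law (cc μ C) (fun ω => X ω.2) = law μ X := by
  rw [← cc_law_fst h C X]
  funext x
  unfold law
  rw [← (Equiv.prodComm Ω Ω).sum_comp]
  refine Finset.sum_congr rfl fun ω _ => ?_
  have := cc_symm μ C ω
  simp only [Equiv.prodComm_apply, this, Prod.snd_swap]

theorem cc_isP {μ : Ω → ℝ} (h : IsP μ) (C : Ω → β) : IsP (cc μ C) := by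
  constructor
  · intro ω
    unfold cc
    split_ifs
    · exact div_nonneg (mul_nonneg (h.1 _) (h.1 _)) (law_nonneg h _ _)
    · exact le_rfl
  · have := congrFun (cc_law_fst h C (fun _ => ())) ()
    simpa [law, h.2] using this

theorem cc_CI {μ : Ω → ℝ} (h : IsP μ) (C : Ω → β) (X : Ω → α) (Y : Ω → δ) :
    CI (cc μ C) (fun ω => X ω.1) (fun ω => Y ω.2) (fun ω => C ω.1) := by
  intro x y c
  rw [cc_law h, cc_law_fst h C C]
  have e1 := cc_law_fst h C (fun ω => (X ω, C ω))
  have e2 : law (cc μ C) (fun ω => (Y ω.2, C ω.1)) = law μ (fun ω => (Y ω, C ω)) := by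
    rw [← cc_law_snd h C (fun ω => (Y ω, C ω))]
    exact law_congr fun ω hω => by rw [cc_supp hω]
  rw [e1, e2]
  by_cases hc : law μ C c = 0
  · have : law μ (fun ω => (X ω, C ω)) (x, c) = 0 :=
      le_antisymm (hc ▸ law_le_snd h X C x c) (law_nonneg h _ _)
    rw [hc, this]; ring
  · field_simp

theorem Hh_cc_fst {μ : Ω → ℝ} (h : IsP μ) (C : Ω → β) (X : Ω → α) :
    Hh (cc μ C) (fun ω => X ω.1) = Hh μ X := by
  unfold Hh; rw [cc_law_fst h C X]

theorem Hh_cc_snd {μ : Ω → ℝ} (h : IsP μ) (C : Ω → β) (X : Ω → α) :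
    Hh (cc μ C) (fun ω => X ω.2) = Hh μ X := by
  unfold Hh; rw [cc_law_snd h C X]

theorem bsg {μ : Ω → ℝ} (h : IsP μ) (U V W : Ω → G) (S : Ω → δ) (hW : ∀ ω, W ω = U ω + V ω) :
    Hh (cc μ (fun ω => (W ω, S ω))) (fun ω => (U ω.1 + V ω.2, (W ω.1, S ω.1)))
      - Hh μ (fun ω => (W ω, S ω)) ≤
    2 * Hh μ (fun ω => (U ω, S ω)) + 2 * Hh μ (fun ω => (V ω, S ω))
      - 2 * Hh μ (fun ω => (U ω, V ω, S ω)) + Hh μ (fun ω => (W ω, S ω)) - 3 * Hh μ S := by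
  set C : Ω → G × δ := fun ω => (W ω, S ω) with hC
  have hP := cc_isP h C
  set ν := cc μ C with hν
  have sW : ∀ ω, ν ω ≠ 0 → U ω.1 + V ω.1 = U ω.2 + V ω.2 := fun ω hω => by
    have := congrArg Prod.fst (cc_supp hω)
    simpa [hC, hW] using this
  have sS : ∀ ω, ν ω ≠ 0 → S ω.1 = S ω.2 := fun ω hω => congrArg Prod.snd (cc_supp hω)
  have a1 := submod hP (fun ω => U ω.1 + V ω.2) (fun ω => W ω.1) (fun ω => S ω.1)
  have a2 := submod hP (fun ω => U ω.1) (fun ω => V ω.1) (fun ω => (U ω.1 + V ω.2, S ω.1))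
  have a3 := submod hP (fun ω => U ω.1) (fun ω => V ω.2) (fun ω => S ω.1)
  have a4 := submod hP (fun ω => V ω.1) (fun ω => U ω.2) (fun ω => S ω.1)
  have b1 := Hh_cc_fst h C S
  have b2 := Hh_cc_fst h C (fun ω => (U ω, S ω))
  have b3 := Hh_cc_fst h C (fun ω => (V ω, S ω))
  have b4 := Hh_cc_fst h C (fun ω => (W ω, S ω))
  have b5 : Hh ν (fun ω => (V ω.2, S ω.1)) = Hh μ (fun ω => (V ω, S ω)) := by
    rw [← Hh_cc_snd h C (fun ω => (V ω, S ω))]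
    exact Hh_congr fun ω ω' h1 h2 => by rw [sS ω h1, sS ω' h2]
  have b6 : Hh ν (fun ω => (U ω.2, S ω.1)) = Hh μ (fun ω => (U ω, S ω)) := by
    rw [← Hh_cc_snd h C (fun ω => (U ω, S ω))]
    exact Hh_congr fun ω ω' h1 h2 => by rw [sS ω h1, sS ω' h2]
  have c1 : Hh ν (fun ω => (U ω.1, U ω.1 + V ω.2, S ω.1)) = Hh ν (fun ω => (U ω.1, V ω.2, S ω.1)) :=
    Hh_rename (fun s => (s.1, s.2.1 - s.1, s.2.2)) (fun s => (s.1, s.1 + s.2.1, s.2.2))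
      (by simp) (by simp)
  have sD : ∀ ω, ν ω ≠ 0 → U ω.1 + V ω.2 = V ω.1 + U ω.2 := fun ω hω => by
    have := sW ω hω
    have := c2 (V ω.1)
    have := c2 (V ω.2)
    grind
  have c3 : Hh ν (fun ω => (V ω.1, U ω.1 + V ω.2, S ω.1)) = Hh ν (fun ω => (V ω.1, U ω.2, S ω.1)) :=
    Hh_congr fun ω ω' h1 h2 => by
      rw [sD ω h1, sD ω' h2]
      simp only [Prod.mk.injEq]
      constructor
      · rintro ⟨p, q, r⟩
        rw [p] at q
        exact ⟨p, add_left_cancel q, r⟩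
      · rintro ⟨p, q, r⟩
        exact ⟨p, by rw [p, q], r⟩
  have d1 := (cc_CI h C (fun ω => (U ω, V ω, S ω)) (fun ω => (U ω, V ω, S ω))).ent_eq hP
  have e1 : Hh ν (fun ω => ((U ω.1, V ω.1, S ω.1), C ω.1)) = Hh μ (fun ω => (U ω, V ω, S ω)) := by
    rw [← Hh_cc_fst h C (fun ω => (U ω, V ω, S ω))]
    exact Hh_rename (fun s => s.1) (fun s => (s, (s.1 + s.2.1, s.2.2)))
      (fun _ => rfl) (fun ω => by simp [hC, hW])
  have e2 : Hh ν (fun ω => ((U ω.2, V ω.2, S ω.2), C ω.1)) = Hh μ (fun ω => (U ω, V ω, S ω)) := by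
    rw [← Hh_cc_snd h C (fun ω => (U ω, V ω, S ω))]
    refine Hh_congr fun ω ω' h1 h2 => ?_
    rw [cc_supp h1, cc_supp h2]
    simp only [hC, hW, Prod.mk.injEq]
    grind
  have e3 : Hh ν (fun ω => ((U ω.1, V ω.1, S ω.1), (U ω.2, V ω.2, S ω.2), C ω.1)) =
      Hh ν (fun ω => (U ω.1, V ω.1, (U ω.1 + V ω.2, S ω.1))) := by
    refine Hh_congr fun ω ω' h1 h2 => ?_
    have p1 := sS ω h1
    have p2 := sS ω' h2
    have p3 := sW ω h1
    have p4 := sW ω' h2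
    simp only [hC, hW, Prod.mk.injEq]
    constructor
    · rintro ⟨⟨u, v, r⟩, ⟨u2, v2, r2⟩, _⟩
      exact ⟨u, v, by rw [u, v2], r⟩
    · rintro ⟨u, v, d, r⟩
      have v2 : V ω.2 = V ω'.2 := by
        rw [u] at d
        exact add_left_cancel d
      have q : U ω.2 + V ω.2 = U ω'.2 + V ω'.2 := by
        first
          | rw [← p3, ← p4, u, v]
          | rw [p3, p4, u, v]
      have u2 : U ω.2 = U ω'.2 := by
        rw [v2] at q
        exact add_right_cancel q
      have r2 : S ω.2 = S ω'.2 := by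
        first
          | rw [← p1, ← p2, r]
          | rw [p1, p2, r]
      exact ⟨⟨u, v, r⟩, ⟨u2, v2, r2⟩, by rw [u, v], r⟩
  have e4 := Hh_cc_fst h C C
  linarith

end Conv

section Pfr
open scoped Classical
variable {G : Type*} [AddCommGroup G] [Module (ZMod 2) G] [Fintype G]

theorem pfr_arith {η m k hx hy h0 E Exx Eyy E0x E0y Q T : ℝ} (hη : η = 1/20)
    (hk : k = E - hx/2 - hy/2) (k0 : 0 ≤ k)
    (hm : m = k + η * ((E0x - h0/2-hx/2)+(E0y-h0/2-hy/2)))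
    (h1 : m ≤ Q - E + η*(E0x+E-hx+E0y+E-hy-h0-E))
    (h3 : m ≤ Q - Exx/2 - Eyy/2 + η*(E0x+Exx-hx+E0y+Eyy-hy-h0-Exx/2-Eyy/2))
    (h4 : m ≤ T-2*E-(hx+hy-E)+η*(E0x+E0y-h0-(hx+hy-E)))
    (h4' : m ≤ (T-(Exx+Eyy)) - (2*hx-Exx)/2-(2*hy-Eyy)/2
      +η*(E0x+E0y-h0-(2*hx-Exx)/2-(2*hy-Eyy)/2))
    (h5 : m ≤ (8*E-2*T+(Exx+Eyy)-3*Q)-(T-(Exx+Eyy))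
      +η*(E0x+E-hx+E0y+E-hy-h0-(T-(Exx+Eyy)))) : k = 0 := by
  subst hη
  linarith

theorem cancel_l (a b : G) : a + (a + b) = b := by rw [← add_assoc, c2, zero_add]
theorem cancel_r (a b : G) : a + b + b = a := by rw [add_assoc, c2, add_zero]

/-- an entropy of a pair `(f, C)` on a pair -/
theorem Hh_fst_add {x y : G → ℝ} (hx : IsP x) (hy : IsP y) :
    Hh (pr x y) (fun ω => (ω.1, ω.1 + ω.2)) = ent x + ent y := by
  rw [ent_eq_Hh x, ent_eq_Hh y, ← Hh_pr hx hy]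
  exact Hh_rename (fun s => (s.1, s.1 + s.2)) (fun s => (s.1, s.1 + s.2))
    (fun ω => by simp [cancel_l]) (fun ω => by simp)

theorem Hh_snd_add {x y : G → ℝ} (hx : IsP x) (hy : IsP y) :
    Hh (pr x y) (fun ω => (ω.2, ω.1 + ω.2)) = ent x + ent y := by
  rw [ent_eq_Hh x, ent_eq_Hh y, ← Hh_pr hx hy]
  exact Hh_rename (fun s => (s.2 + s.1, s.1)) (fun s => (s.2, s.1 + s.2))
    (fun ω => by simp [cancel_r]) (fun ω => by simp)

theorem pfr_zero {η : ℝ} (hη : η = 1/20) {x0 X Y : G → ℝ} (h0 : IsP x0) (hX : IsP X) (hY : IsP Y)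
    (hmin : ∀ a b : G → ℝ, IsP a → IsP b →
      rd X Y + η * (rd x0 X + rd x0 Y) ≤ rd a b + η * (rd x0 a + rd x0 b)) : rd X Y = 0 := by
  have η0 : 0 ≤ η := by rw [hη]; norm_num
  have hXY := pr_isP hX hY
  have hμ := pr_isP hXY hXY
  set μ := pr (pr X Y) (pr X Y) with hμd
  have hν := pr_isP (pr_isP hX hX) (pr_isP hY hY)
  set ν := pr (pr X X) (pr Y Y) with hνd
  have hQ1 : ent (conv (conv X Y) (conv Y X)) = Hh μ (fun ω => (ω.1.1 + ω.1.2) + (ω.2.1 + ω.2.2)) := by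
    rw [conv_comm Y X]
    exact Hh_conv (pr X Y) (pr X Y) (fun ω => ω.1 + ω.2) (fun ω => ω.1 + ω.2)
  have eqv : ∀ {α : Type _} [Fintype α] (Z : (G × G) × (G × G) → α), Hh ν Z = Hh μ (fun ω => Z ((ω.1.1, ω.2.1), (ω.1.2, ω.2.2))) := by
    intro α _ Z
    refine Hh_equiv (Equiv.prodProdProdComm G G G G) (fun ω => ?_) Z
    simp only [hμd, hνd, pr, Equiv.prodProdProdComm_apply]
    ring
  have hQ2 : ent (conv (conv X X) (conv Y Y)) = Hh μ (fun ω => (ω.1.1 + ω.1.2) + (ω.2.1 + ω.2.2)) := by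
    have := Hh_conv (pr X X) (pr Y Y) (fun ω => ω.1 + ω.2) (fun ω => ω.1 + ω.2)
    refine (this.trans (eqv _)).trans ?_
    congr 1
    funext ω
    abel
  set Q := Hh μ (fun ω => (ω.1.1 + ω.1.2) + (ω.2.1 + ω.2.2)) with hQ
  set T := Hh μ (fun ω => (ω.1.1 + ω.1.2, ω.1.2 + ω.2.1, (ω.1.1 + ω.1.2) + (ω.2.1 + ω.2.2))) with hT
  have HUS : Hh μ (fun ω => (ω.1.1 + ω.1.2, (ω.1.1 + ω.1.2) + (ω.2.1 + ω.2.2))) = 2 * ent (conv X Y) := by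
    rw [two_mul, ent_conv, ← Hh_pr hXY hXY]
    exact Hh_rename (fun s => (s.1, s.1 + s.2)) (fun s => (s.1, s.1 + s.2))
      (fun ω => by simp [cancel_l]) (fun ω => by simp)
  have HVS : Hh μ (fun ω => (ω.1.2 + ω.2.1, (ω.1.1 + ω.1.2) + (ω.2.1 + ω.2.2))) = 2 * ent (conv X Y) := by
    rw [← HUS]
    symm
    have e : (G × G) × (G × G) ≃ (G × G) × (G × G) :=
      ⟨fun s => ((s.2.1, s.1.2), (s.1.1, s.2.2)), fun s => ((s.2.1, s.1.2), (s.1.1, s.2.2)),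
        fun _ => rfl, fun _ => rfl⟩
    refine (Hh_equiv (μ := μ) (⟨fun s => ((s.2.1, s.1.2), (s.1.1, s.2.2)), fun s => ((s.2.1, s.1.2), (s.1.1, s.2.2)),
        fun _ => rfl, fun _ => rfl⟩ : (G × G) × (G × G) ≃ (G × G) × (G × G)) (fun ω => ?_) _).trans ?_
    · simp only [hμd, pr, Equiv.coe_fn_mk]; ring
    · congr 1
      funext ω
      simp only [Equiv.coe_fn_mk, Prod.mk.injEq]
      constructor <;> abel
  have HWS : Hh μ (fun ω => (ω.1.1 + ω.2.1, (ω.1.1 + ω.1.2) + (ω.2.1 + ω.2.2))) =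
      ent (conv X X) + ent (conv Y Y) := by
    rw [ent_conv, ent_conv, ← Hh_pr (pr_isP hX hX) (pr_isP hY hY), eqv]
    refine Hh_rename (fun s => (s.1, s.1 + s.2)) (fun s => (s.1, s.1 + s.2))
      (fun ω => ?_) (fun ω => ?_)
    · simp only [Prod.mk.injEq, true_and]
      rw [show ω.1.1 + ω.1.2 + (ω.2.1 + ω.2.2) = (ω.1.1 + ω.2.1) + (ω.1.2 + ω.2.2) by abel, cancel_l]
    · simp only [Prod.mk.injEq, true_and]
      abel
  -- (4)
  have q4 := cond_min η0 h0 hmin hμ (CI_pr hXY hXY (fun ω => ω.1) (fun ω => ω.2)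
    (fun ω => ω.1 + ω.2) (fun ω => ω.1 + ω.2))
  have a1 : Hh μ (fun ω => (ω.1.1 + ω.1.2, ω.2.1 + ω.2.2)) = 2 * ent (conv X Y) := by
    rw [two_mul, ent_conv, ← Hh_pr hXY hXY]
  have a2 : Hh μ (fun ω => (ω.1.1, (ω.1.1 + ω.1.2, ω.2.1 + ω.2.2))) = ent X + ent Y + ent (conv X Y) := by
    rw [← Hh_fst_add hX hY, ent_conv, ← Hh_pr hXY hXY]
    exact Hh_rename (fun s => ((s.1, s.2.1), s.2.2)) (fun s => (s.1.1, (s.1.2, s.2)))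
      (fun _ => rfl) (fun _ => rfl)
  have a3 : Hh μ (fun ω => (ω.2.2, (ω.1.1 + ω.1.2, ω.2.1 + ω.2.2))) = ent (conv X Y) + (ent X + ent Y) := by
    rw [← Hh_snd_add hX hY, ent_conv, ← Hh_pr hXY hXY]
    exact Hh_rename (fun s => (s.2.1, (s.1, s.2.2))) (fun s => (s.2.1, (s.1, s.2.2)))
      (fun _ => rfl) (fun _ => rfl)
  have a4 : Hh μ (fun ω => (ω.1.1 + ω.2.2, (ω.1.1 + ω.1.2, ω.2.1 + ω.2.2))) = T := by
    refine Hh_rename (fun s => (s.2.1, s.1 + (s.2.1 + s.2.2), s.2.1 + s.2.2))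
      (fun s => (s.2.1 + s.2.2, s.1, s.1 + s.2.2)) (fun ω => ?_) (fun ω => ?_)
    · simp only [Prod.mk.injEq, true_and, and_true]
      have := c2 ω.1.1; have := c2 ω.2.2; grind
    · simp only [Prod.mk.injEq, true_and]
      have := c2 ω.1.1; have := c2 ω.1.2; have := c2 ω.2.1
      constructor <;> grind
  have l1 : law μ (fun ω => ω.1.1) = X := by
    rw [hμd, law_pr_fst _ hXY, law_pr_fst _ hY (fun ω => ω), law_id]
  have l2 : law μ (fun ω => ω.2.2) = Y := by
    rw [hμd, law_pr_snd hXY, law_pr_snd hX _ (fun ω => ω), law_id]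
  rw [l1, l2] at q4
  rw [a1, a2, a3, a4] at q4
  -- (4b)
  have q4' := cond_min η0 h0 hmin hν (CI_pr (pr_isP hX hX) (pr_isP hY hY) (fun ω => ω.1) (fun ω => ω.1)
    (fun ω => ω.1 + ω.2) (fun ω => ω.1 + ω.2))
  have b1 : Hh ν (fun ω => (ω.1.1 + ω.1.2, ω.2.1 + ω.2.2)) = ent (conv X X) + ent (conv Y Y) := by
    rw [ent_conv, ent_conv, ← Hh_pr (pr_isP hX hX) (pr_isP hY hY)]
  have b2 : Hh ν (fun ω => (ω.1.1, (ω.1.1 + ω.1.2, ω.2.1 + ω.2.2))) = ent X + ent X + ent (conv Y Y) := by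
    rw [← Hh_fst_add hX hX, ent_conv, ← Hh_pr (pr_isP hX hX) (pr_isP hY hY)]
    exact Hh_rename (fun s => ((s.1, s.2.1), s.2.2)) (fun s => (s.1.1, (s.1.2, s.2)))
      (fun _ => rfl) (fun _ => rfl)
  have b3 : Hh ν (fun ω => (ω.2.1, (ω.1.1 + ω.1.2, ω.2.1 + ω.2.2))) = ent (conv X X) + (ent Y + ent Y) := by
    rw [← Hh_fst_add hY hY, ent_conv, ← Hh_pr (pr_isP hX hX) (pr_isP hY hY)]
    exact Hh_rename (fun s => (s.2.1, (s.1, s.2.2))) (fun s => (s.2.1, (s.1, s.2.2)))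
      (fun _ => rfl) (fun _ => rfl)
  have b4 : Hh ν (fun ω => (ω.1.1 + ω.2.1, (ω.1.1 + ω.1.2, ω.2.1 + ω.2.2))) = T := by
    rw [eqv]
    refine Hh_rename (fun s => (s.1, s.1 + s.2.1, s.2.1 + s.2.2))
      (fun s => (s.1, s.1 + s.2.1, s.1 + s.2.1 + s.2.2)) (fun ω => ?_) (fun ω => ?_)
    · simp only [Prod.mk.injEq, true_and, and_true]
      have := c2 ω.1.1
      constructor <;> grind
    · simp only [Prod.mk.injEq, true_and]
      have := c2 ω.1.1; have := c2 ω.1.2; have := c2 ω.2.1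
      constructor <;> grind
  have k1 : law ν (fun ω => ω.1.1) = X := by
    rw [hνd, law_pr_fst _ (pr_isP hY hY), law_pr_fst _ hX (fun ω => ω), law_id]
  have k2 : law ν (fun ω => ω.2.1) = Y := by
    exact (law_pr_snd (pr_isP hX hX) (pr Y Y) (fun ω : G × G => ω.1)).trans (by rw [law_pr_fst _ hY (fun ω => ω), law_id])
  rw [k1, k2] at q4'
  rw [b1, b2, b3, b4] at q4'
  have q5 := cond_min η0 h0 hmin (cc_isP hμ (fun ω => (ω.1.1 + ω.2.1, (ω.1.1 + ω.1.2) + (ω.2.1 + ω.2.2))))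
    (cc_CI hμ (fun ω => (ω.1.1 + ω.2.1, (ω.1.1 + ω.1.2) + (ω.2.1 + ω.2.2))) (fun ω => ω.1.1 + ω.1.2) (fun ω => ω.1.2 + ω.2.1))
  have hb := bsg hμ (fun ω => ω.1.1 + ω.1.2) (fun ω => ω.1.2 + ω.2.1) (fun ω => ω.1.1 + ω.2.1)
    (fun ω => (ω.1.1 + ω.1.2) + (ω.2.1 + ω.2.2))
    (fun ω => by have := c2 ω.1.2; grind)
  rw [cc_law_fst hμ _ (fun ω => ω.1.1 + ω.1.2), cc_law_snd hμ _ (fun ω => ω.1.2 + ω.2.1)] at q5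
  rw [Hh_cc_fst hμ _ (fun ω => (ω.1.1 + ω.2.1, (ω.1.1 + ω.1.2) + (ω.2.1 + ω.2.2)))] at q5
  rw [Hh_cc_fst hμ _ (fun ω => (ω.1.1 + ω.1.2, (ω.1.1 + ω.2.1, (ω.1.1 + ω.1.2) + (ω.2.1 + ω.2.2))))] at q5
  have c1 : Hh (cc μ (fun ω => (ω.1.1 + ω.2.1, (ω.1.1 + ω.1.2) + (ω.2.1 + ω.2.2))))
      (fun ω => (ω.2.1.2 + ω.2.2.1, (ω.1.1.1 + ω.1.2.1, (ω.1.1.1 + ω.1.1.2) + (ω.1.2.1 + ω.1.2.2)))) = T := by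
    have s1 := Hh_cc_snd hμ (fun ω => (ω.1.1 + ω.2.1, (ω.1.1 + ω.1.2) + (ω.2.1 + ω.2.2)))
      (fun ω => (ω.1.2 + ω.2.1, (ω.1.1 + ω.2.1, (ω.1.1 + ω.1.2) + (ω.2.1 + ω.2.2))))
    have s2 : Hh μ (fun ω => (ω.1.2 + ω.2.1, (ω.1.1 + ω.2.1, (ω.1.1 + ω.1.2) + (ω.2.1 + ω.2.2)))) = T := by
      refine Hh_rename (fun s => (s.1 + s.2.1, s.1, s.2.2))
        (fun s => (s.2.1, s.1 + s.2.1, s.2.2)) (fun ω => ?_) (fun ω => ?_)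
      · simp only [Prod.mk.injEq, true_and, and_true]
        have := c2 ω.2.1
        grind
      · simp only [Prod.mk.injEq, true_and, and_true]
        have := c2 ω.1.2
        grind
    rw [← s2, ← s1]
    refine Hh_congr fun ω ω' r1 r2 => ?_
    have t1 := cc_supp r1
    have t2 := cc_supp r2
    simp only [Prod.mk.injEq] at t1 t2 ⊢
    rw [t1.1, t1.2, t2.1, t2.2]
  have c3 : Hh μ (fun ω => (ω.1.1 + ω.1.2, (ω.1.1 + ω.2.1, (ω.1.1 + ω.1.2) + (ω.2.1 + ω.2.2)))) = T := by
    refine Hh_rename (fun s => (s.1, s.1 + s.2.1, s.2.2))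
      (fun s => (s.1, s.1 + s.2.1, s.2.2)) (fun ω => ?_) (fun ω => ?_)
    · simp only [Prod.mk.injEq, true_and, and_true]
      have := c2 ω.1.1
      grind
    · simp only [Prod.mk.injEq, true_and, and_true]
      have := c2 ω.1.2
      grind
  have m1 : law μ (fun ω => ω.1.1 + ω.1.2) = conv X Y := by
    exact law_pr_fst (pr X Y) hXY (fun ω : G × G => ω.1 + ω.2)
  have m2 : law μ (fun ω => ω.1.2 + ω.2.1) = conv Y X := by
    have := law_law μ (fun ω => (ω.1.2, ω.2.1)) (fun s => s.1 + s.2)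
    rw [← this, hμd, law_pr _ _ (fun ω : G × G => ω.2) (fun ω : G × G => ω.1), law_pr_snd hX _ (fun ω => ω),
      law_pr_fst _ hY (fun ω => ω), law_id, law_id]
    rfl
  rw [m1, m2, c1, c3] at q5
  rw [HWS] at q5 hb
  rw [HUS, HVS, ← hT, ← hQ] at hb
  have q1 := hmin _ _ (conv_isP hX hY) (conv_isP hY hX)
  have q3 := hmin _ _ (conv_isP hX hX) (conv_isP hY hY)
  have d1 := madiman h0 hX hY
  have d2 := madiman h0 hY hX
  have d3 := madiman h0 hX hX
  have d4 := madiman h0 hY hY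
  have hc := conv_comm Y X
  have hr := rd_nonneg hX hY
  have hcE : ent (conv Y X) = ent (conv X Y) := by rw [hc]
  rw [hcE] at d2
  unfold rd at q1 q3 hr q4 q4' q5 ⊢
  rw [hQ1, hcE] at q1
  rw [hQ2] at q3
  clear_value Q T
  refine pfr_arith hη rfl hr rfl (h0 := ent x0) (E0x := ent (conv x0 X)) (E0y := ent (conv x0 Y)) (Q := Q) (T := T) (Exx := ent (conv X X)) (Eyy := ent (conv Y Y)) ?_ ?_ ?_ ?_ ?_
  · refine q1.trans ?_
    have := mul_le_mul_of_nonneg_left (add_le_add d1 d2) η0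
    linarith
  · refine q3.trans ?_
    have := mul_le_mul_of_nonneg_left (add_le_add d3 d4) η0
    linarith
  · refine q4.trans (le_of_eq ?_)
    ring
  · refine q4'.trans (le_of_eq ?_)
    ring
  · refine q5.trans ?_
    have := mul_le_mul_of_nonneg_left (add_le_add d1 d2) η0
    linarith

end Pfr

section Pfr2
open scoped Classical
variable {α : Type*} [Fintype α]
variable {G : Type*} [AddCommGroup G] [Module (ZMod 2) G] [Fintype G]

theorem isP_iff (x : α → ℝ) : IsP x ↔ x ∈ stdSimplex ℝ α := Iff.rfl

theorem exists_big {p : α → ℝ} (hp : IsP p) : ∃ w, 0 < p w ∧ -ent p ≤ Real.log (p w) := by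
  by_contra hcon
  push Not at hcon
  have h1 : ∑ w, p w * Real.log (p w) < ∑ w, p w * (-ent p) := by
    refine Finset.sum_lt_sum (fun w _ => ?_) ?_
    · rcases (hp.1 w).lt_or_eq with h | h
      · exact mul_le_mul_of_nonneg_left (hcon w h).le h.le
      · rw [← h]; simp
    · by_contra h0
      push Not at h0
      have : ∀ w, p w = 0 := fun w => by
        by_contra hw
        have hpos := lt_of_le_of_ne (hp.1 w) (Ne.symm hw)
        have := h0 w (Finset.mem_univ w)
        have h3 := mul_lt_mul_of_pos_left (hcon w hpos) hpos
        linarith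
      have h2 := hp.2
      simp [this] at h2
  rw [← Finset.sum_mul, hp.2, one_mul] at h1
  have : ent p = - ∑ w, p w * Real.log (p w) := by
    simp [ent, Real.negMulLog]
  linarith

theorem ent_continuous : Continuous (fun p : α → ℝ => ent p) := by
  unfold ent
  exact continuous_finset_sum _ fun s _ => Real.continuous_negMulLog.comp (continuous_apply s)

theorem conv_continuous : Continuous (fun p : (G → ℝ) × (G → ℝ) => conv p.1 p.2) := by
  refine continuous_pi fun w => ?_
  simp_rw [conv_apply]
  fun_prop

theorem rd_continuous : Continuous (fun p : (G → ℝ) × (G → ℝ) => rd p.1 p.2) := by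
  unfold rd
  have h1 := (ent_continuous (α := G)).comp (conv_continuous (G := G))
  have h2 := (ent_continuous (α := G)).comp (continuous_fst (X := G → ℝ) (Y := G → ℝ))
  have h3 := (ent_continuous (α := G)).comp (continuous_snd (X := G → ℝ) (Y := G → ℝ))
  exact (h1.sub (h2.div_const 2)).sub (h3.div_const 2)

theorem exists_min (η : ℝ) {x0 : G → ℝ} (h0 : IsP x0) : ∃ X Y : G → ℝ, IsP X ∧ IsP Y ∧
    ∀ a b : G → ℝ, IsP a → IsP b →
      rd X Y + η * (rd x0 X + rd x0 Y) ≤ rd a b + η * (rd x0 a + rd x0 b) := by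
  have hK : IsCompact ((stdSimplex ℝ G) ×ˢ (stdSimplex ℝ G)) :=
    (isCompact_stdSimplex ℝ G).prod (isCompact_stdSimplex ℝ G)
  have hc : Continuous (fun p : (G → ℝ) × (G → ℝ) =>
      rd p.1 p.2 + η * (rd x0 p.1 + rd x0 p.2)) := by
    have h1 := (rd_continuous (G := G)).comp
      ((continuous_const (y := x0)).prodMk (continuous_fst (X := G → ℝ) (Y := G → ℝ)))
    have h2 := (rd_continuous (G := G)).comp
      ((continuous_const (y := x0)).prodMk (continuous_snd (X := G → ℝ) (Y := G → ℝ)))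
    exact rd_continuous.add (continuous_const.mul (h1.add h2))
  obtain ⟨p, hp, hm⟩ := hK.exists_isMinOn ⟨(x0, x0), Set.mk_mem_prod h0 h0⟩ hc.continuousOn
  rw [isMinOn_iff] at hm
  refine ⟨p.1, p.2, hp.1, hp.2, fun a b ha hb => ?_⟩
  exact hm (a, b) (Set.mk_mem_prod ha hb)

theorem conv_eq {X Y : G → ℝ} (hX : IsP X) (hY : IsP Y) (h : ent (conv X Y) ≤ ent X) :
    ∀ w b, Y b ≠ 0 → X (w + b) = conv X Y w := by
  have hj : ∀ w, ∑ b, Y b • Real.negMulLog (X (w + b)) ≤ Real.negMulLog (conv X Y w) := fun w => by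
    have := Real.strictConcaveOn_negMulLog.concaveOn.le_map_sum (t := Finset.univ) (w := Y)
      (p := fun b => X (w + b)) (fun b _ => hY.1 b) hY.2 (fun b _ => hX.1 _)
    rw [conv_apply]
    exact this
  have hs : ∑ w, ∑ b, Y b • Real.negMulLog (X (w + b)) = ent X := by
    rw [Finset.sum_comm]
    have : ∀ b, ∑ w, Y b • Real.negMulLog (X (w + b)) = Y b * ent X := fun b => by
      simp only [smul_eq_mul]
      rw [← Finset.mul_sum]
      congr 1
      exact Equiv.sum_comp (Equiv.addRight b) (fun w => Real.negMulLog (X w))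
    simp_rw [this]
    rw [← Finset.sum_mul, hY.2, one_mul]
  have heq : ∀ w, ∑ b, Y b • Real.negMulLog (X (w + b)) = Real.negMulLog (conv X Y w) := by
    have h1 := (Finset.sum_eq_sum_iff_of_le (s := Finset.univ) (fun w _ => hj w)).1
      (le_antisymm (Finset.sum_le_sum fun w _ => hj w) (by rw [hs]; exact h))
    exact fun w => h1 w (Finset.mem_univ w)
  intro w b hb
  have h2 := (Real.strictConcaveOn_negMulLog.map_sum_eq_iff' (t := Finset.univ) (w := Y)
      (p := fun b => X (w + b)) (fun b _ => hY.1 b) hY.2 (fun b _ => hX.1 _)).1 (by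
        have := heq w
        rw [conv_apply] at this
        exact this.symm) b (Finset.mem_univ b) hb
  rw [conv_apply]
  exact h2

theorem exists_ne_zero' {X : α → ℝ} (hX : IsP X) : ∃ a, X a ≠ 0 := by
  by_contra h
  push Not at h
  have := hX.2
  simp [h] at this

theorem rd_zero_struct {X Y : G → ℝ} (hX : IsP X) (hY : IsP Y) (h : rd X Y = 0) :
    ∃ (V : Submodule (ZMod 2) G) (a : G), ∀ t, X t = if t + a ∈ V then (Nat.card V : ℝ)⁻¹ else 0 := by
  have h1 := ent_le_conv hX hY
  have h2 := ent_le_conv hY hX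
  have hcc := conv_comm Y X
  rw [hcc] at h2
  unfold rd at h
  have c1 := conv_eq hX hY (by linarith)
  have c3 := conv_eq hY hX (by rw [hcc]; linarith)
  rw [hcc] at c3
  obtain ⟨a, ha⟩ := exists_ne_zero' hX
  obtain ⟨b, hb⟩ := exists_ne_zero' hY
  have XY : ∀ w, X w = Y (w + b + a) := fun w => by
    rw [c3 _ a ha, ← c1 _ b hb, cancel_r]
  let V0 : AddSubgroup G :=
    { carrier := {v | ∀ w, X (w + v) = X w}
      add_mem' := fun {u v} hu hv w => by
        rw [← add_assoc]
        exact (hv _).trans (hu w)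
      zero_mem' := fun w => by rw [add_zero]
      neg_mem' := fun {v} hv w => by
        have := hv (w + -v)
        rw [neg_add_cancel_right] at this
        exact this.symm }
  let V : Submodule (ZMod 2) G := AddSubgroup.toZModSubmodule 2 V0
  have hV : ∀ v, v ∈ V ↔ ∀ w, X (w + v) = X w := fun v => Iff.rfl
  have s1 : ∀ t, X t ≠ 0 → t + a ∈ V := fun t ht w => by
    rw [XY w, XY, c3 _ a ha, ← c3 _ t ht]
    congr 1
    rw [show w + (t + a) + b + t = w + b + a + t + t by abel, cancel_r]
  have s2 : ∀ t, t + a ∈ V → X t = X a := fun t ht => by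
    have := (hV _).1 ht a
    rw [← this]
    congr 1
    rw [show a + (t + a) = t + a + a by abel, cancel_r]
  have s3 : ∀ t, X t = if t + a ∈ V then X a else 0 := fun t => by
    split_ifs with ht
    · exact s2 t ht
    · by_contra h0
      exact ht (s1 t h0)
  refine ⟨V, a, ?_⟩
  have s4 : (Nat.card V : ℝ) * X a = 1 := by
    have := hX.2
    rw [Finset.sum_congr rfl (fun t _ => s3 t)] at this
    rw [← Equiv.sum_comp (Equiv.addRight a)] at this
    simp only [Equiv.coe_addRight, cancel_r] at this
    rw [← Finset.sum_filter, Finset.sum_const, nsmul_eq_mul] at this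
    rw [← this]
    congr 2
    rw [Nat.card_eq_fintype_card, Fintype.card_subtype]
  have s5 : X a = (Nat.card V : ℝ)⁻¹ := by
    exact eq_inv_of_mul_eq_one_right s4
  rw [← s5]
  exact s3

theorem coset_bound {x0 X : G → ℝ} (h0 : IsP x0) (hX : IsP X) {V : Submodule (ZMod 2) G} {a : G}
    (hV : ∀ t, X t = if t + a ∈ V then (Nat.card V : ℝ)⁻¹ else 0) {K : ℝ} (hK : rd x0 X ≤ K) :
    ∃ a' : G, 0 < (∑ t, if t + a' ∈ V then x0 t else 0) ∧
      Real.log (Nat.card V) / 2 - ent x0 / 2 - K ≤ Real.log (∑ t, if t + a' ∈ V then x0 t else 0) := by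
  have hcard : (0:ℝ) < Nat.card V := by exact_mod_cast Nat.card_pos
  have hent : ent X = Real.log (Nat.card V) := by
    have : ∀ t, Real.negMulLog (X t) = X t * Real.log (Nat.card V) := fun t => by
      rw [hV]
      split_ifs
      · rw [Real.negMulLog, Real.log_inv]; ring
      · simp
    unfold ent
    simp_rw [this]
    rw [← Finset.sum_mul, hX.2, one_mul]
  obtain ⟨w, hw, hw2⟩ := exists_big (conv_isP h0 hX)
  have e : conv x0 X w = (∑ t, if t + (w + a) ∈ V then x0 t else 0) * (Nat.card V : ℝ)⁻¹ := by
    rw [conv_comm, conv_apply, Finset.sum_mul]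
    refine Finset.sum_congr rfl fun t _ => ?_
    rw [hV, show w + t + a = t + (w + a) by abel]
    split_ifs <;> simp
  refine ⟨w + a, ?_, ?_⟩
  · rw [e] at hw
    exact pos_of_mul_pos_left hw (by positivity)
  · have hp : 0 < (∑ t, if t + (w + a) ∈ V then x0 t else 0) := by
      rw [e] at hw
      exact pos_of_mul_pos_left hw (by positivity)
    rw [e, Real.log_mul hp.ne' (by positivity), Real.log_inv] at hw2
    unfold rd at hK
    linarith

theorem pfr_cor {x0 : G → ℝ} (h0 : IsP x0) : ∃ (V : Submodule (ZMod 2) G) (a : G),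
    0 < (∑ t, if t + a ∈ V then x0 t else 0) ∧
      Real.log (Nat.card V) / 2 - ent x0 / 2 - 11 * rd x0 x0 ≤
        Real.log (∑ t, if t + a ∈ V then x0 t else 0) := by
  obtain ⟨X, Y, hX, hY, hmin⟩ := exists_min (1/20) h0
  have hz := pfr_zero rfl h0 hX hY hmin
  have h1 := hmin x0 x0 h0 h0
  rw [hz] at h1
  by_cases hc : rd x0 X ≤ 11 * rd x0 x0
  · obtain ⟨V, a, hV⟩ := rd_zero_struct hX hY hz
    obtain ⟨a', h3⟩ := coset_bound h0 hX hV hc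
    exact ⟨V, a', h3⟩
  · have hc2 : rd x0 Y ≤ 11 * rd x0 x0 := by
      push Not at hc
      linarith
    have hz2 : rd Y X = 0 := by
      unfold rd at hz ⊢
      rw [conv_comm]
      linarith
    obtain ⟨V, a, hV⟩ := rd_zero_struct hY hX hz2
    obtain ⟨a', h3⟩ := coset_bound h0 hY hV hc2
    exact ⟨V, a', h3⟩

end Pfr2

section Quantum
open scoped Classical
open scoped ComplexConjugate

abbrev EE (n : ℕ) := Fin n → ZMod 2
abbrev GG (n : ℕ) := EE n × EE n

noncomputable def sg (a : ZMod 2) : ℝ := (-1) ^ a.val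

theorem zmod2_cases (a : ZMod 2) : a = 0 ∨ a = 1 := by
  revert a; decide

theorem sg_zero : sg 0 = 1 := by simp [sg]
theorem sg_one : sg 1 = -1 := by simp [sg, ZMod.val_one]
theorem sg_add (a b : ZMod 2) : sg (a + b) = sg a * sg b := by
  have h : (1 : ZMod 2) + 1 = 0 := by decide
  rcases zmod2_cases a with rfl | rfl <;> rcases zmod2_cases b with rfl | rfl <;>
    simp [sg_zero, sg_one, h]
theorem sg_cast (a : ZMod 2) : ((sg a : ℝ) : ℂ) = (-1 : ℂ) ^ a.val := by simp [sg]
theorem sg_sq (a : ZMod 2) : sg a * sg a = 1 := by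
  rcases zmod2_cases a with rfl | rfl <;> simp [sg_zero, sg_one]
theorem sg_le (a : ZMod 2) : sg a ≤ 1 := by
  rcases zmod2_cases a with rfl | rfl <;> simp [sg_zero, sg_one]
theorem sg_abs (a : ZMod 2) : |sg a| = 1 := by
  rcases zmod2_cases a with rfl | rfl <;> simp [sg_zero, sg_one]

variable {n : ℕ}

def dt (a b : EE n) : ZMod 2 := ∑ i, a i * b i
theorem dt_add_left (a b c : EE n) : dt (a + b) c = dt a c + dt b c := by
  simp [dt, add_mul, Finset.sum_add_distrib]
theorem dt_add_right (a b c : EE n) : dt a (b + c) = dt a b + dt a c := by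
  simp [dt, mul_add, Finset.sum_add_distrib]
theorem dt_comm (a b : EE n) : dt a b = dt b a := by
  simp [dt, mul_comm]
theorem sympl_eq (x y : GG n) : sympl n x y = dt x.1 y.2 + dt x.2 y.1 := rfl
theorem sympl_comm (x y : GG n) : sympl n x y = sympl n y x := by
  rw [sympl_eq, sympl_eq, dt_comm x.1, dt_comm x.2, add_comm]
theorem sympl_add_left (x y z : GG n) : sympl n (x + y) z = sympl n x z + sympl n y z := by
  simp only [sympl_eq, Prod.fst_add, Prod.snd_add, dt_add_left]; ring
theorem sympl_add_right (x y z : GG n) : sympl n x (y + z) = sympl n x y + sympl n x z := by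
  rw [sympl_comm, sympl_add_left, sympl_comm y, sympl_comm z]
theorem sympl_self (x : GG n) : sympl n x x = 0 := by
  rw [sympl_eq, dt_comm x.2, CharTwo.add_self_eq_zero]
theorem sympl_zero_left (x : GG n) : sympl n 0 x = 0 := by simp [sympl]
theorem sympl_zero_right (x : GG n) : sympl n x 0 = 0 := by simp [sympl]
theorem sympl_smul_left (c : ZMod 2) (x y : GG n) : sympl n (c • x) y = c * sympl n x y := by
  rcases zmod2_cases c with rfl | rfl <;> simp [sympl_zero_left]

theorem dt_nondeg (a : EE n) (h : a ≠ 0) : ∃ b, dt b a = 1 := by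
  obtain ⟨i, hi⟩ := Function.ne_iff.1 h
  refine ⟨Pi.single i 1, ?_⟩
  have : a i = 1 := (zmod2_cases (a i)).resolve_left hi
  simp [dt, Pi.single_apply, this]

theorem sympl_nondeg (a : GG n) (h : a ≠ 0) : ∃ b, sympl n b a = 1 := by
  by_cases h1 : a.1 = 0
  · have h2 : a.2 ≠ 0 := fun h2 => h (Prod.ext h1 h2)
    obtain ⟨b, hb⟩ := dt_nondeg _ h2
    exact ⟨(b, 0), by simp [sympl_eq, hb]; simp [dt]⟩
  · obtain ⟨b, hb⟩ := dt_nondeg _ h1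
    exact ⟨(0, b), by simp [sympl_eq, hb]; simp [dt]⟩

/-- sum over a subspace -/
noncomputable def sv (V : Submodule (ZMod 2) (GG n)) (F : GG n → ℝ) : ℝ :=
  ∑ y, if y ∈ V then F y else 0

theorem sv_shift (V : Submodule (ZMod 2) (GG n)) (F : GG n → ℝ) {a : GG n} (ha : a ∈ V) :
    sv V (fun y => F (y + a)) = sv V F := by
  unfold sv
  rw [← Equiv.sum_comp (Equiv.addRight a)]
  refine Finset.sum_congr rfl fun y _ => ?_
  simp only [Equiv.coe_addRight, cancel_r, Submodule.add_mem_iff_left V ha]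

theorem sv_const (V : Submodule (ZMod 2) (GG n)) (c : ℝ) : sv V (fun _ => c) = Nat.card V * c := by
  unfold sv
  rw [← Finset.sum_filter, Finset.sum_const, nsmul_eq_mul, Nat.card_eq_fintype_card,
    Fintype.card_subtype]

theorem sv_nonneg (V : Submodule (ZMod 2) (GG n)) {F : GG n → ℝ} (h : ∀ y, 0 ≤ F y) : 0 ≤ sv V F := by
  unfold sv
  refine Finset.sum_nonneg fun y _ => ?_
  split_ifs
  exacts [h y, le_rfl]

theorem sv_mono {V W : Submodule (ZMod 2) (GG n)} (hVW : V ≤ W) {F : GG n → ℝ} (h : ∀ y, 0 ≤ F y) :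
    sv V F ≤ sv W F := by
  unfold sv
  refine Finset.sum_le_sum fun y _ => ?_
  by_cases hy : y ∈ V
  · simp [hy, hVW hy]
  · simp only [hy, if_false]
    split_ifs
    exacts [h y, le_rfl]

theorem sv_le (V : Submodule (ZMod 2) (GG n)) {F F' : GG n → ℝ} (h : ∀ y ∈ V, F y ≤ F' y) :
    sv V F ≤ sv V F' := by
  unfold sv
  refine Finset.sum_le_sum fun y _ => ?_
  split_ifs with hy
  exacts [h y hy, le_rfl]

theorem sv_congr (V : Submodule (ZMod 2) (GG n)) {F F' : GG n → ℝ} (h : ∀ y ∈ V, F y = F' y) :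
    sv V F = sv V F' := 
  le_antisymm (sv_le V fun y hy => (h y hy).le) (sv_le V fun y hy => (h y hy).ge)

theorem sv_add (V : Submodule (ZMod 2) (GG n)) (F F' : GG n → ℝ) :
    sv V (fun y => F y + F' y) = sv V F + sv V F' := by
  unfold sv
  rw [← Finset.sum_add_distrib]
  refine Finset.sum_congr rfl fun y _ => ?_
  split_ifs <;> simp

theorem sv_mul (V : Submodule (ZMod 2) (GG n)) (c : ℝ) (F : GG n → ℝ) :
    sv V (fun y => c * F y) = c * sv V F := by
  unfold sv
  rw [Finset.mul_sum]
  refine Finset.sum_congr rfl fun y _ => ?_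
  split_ifs <;> simp

theorem sv_sum {ι : Type*} [Fintype ι] (V : Submodule (ZMod 2) (GG n)) (F : ι → GG n → ℝ) :
    sv V (fun y => ∑ i, F i y) = ∑ i, sv V (F i) := by
  unfold sv
  rw [Finset.sum_comm]
  refine Finset.sum_congr rfl fun y _ => ?_
  split_ifs <;> simp

theorem sv_char (V : Submodule (ZMod 2) (GG n)) (y : GG n) :
    sv V (fun x => sg (sympl n x y)) = if ∀ x ∈ V, sympl n x y = 0 then (Nat.card V : ℝ) else 0 := by
  split_ifs with h
  · rw [sv_congr V (F' := fun _ => 1) fun x hx => by rw [h x hx, sg_zero], sv_const, mul_one]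
  · push Not at h
    obtain ⟨a, ha, hs⟩ := h
    have hs1 := (zmod2_cases _).resolve_left hs
    have h1 := sv_shift V (fun x => sg (sympl n x y)) ha
    have h2 : sv V (fun x => sg (sympl n (x + a) y)) = (-1) * sv V (fun x => sg (sympl n x y)) := by
      rw [← sv_mul]
      refine sv_congr V fun x _ => ?_
      rw [sympl_add_left, sg_add, hs1, sg_one]; ring
    linarith

theorem sv_char_nonneg (V : Submodule (ZMod 2) (GG n)) (y : GG n) :
    0 ≤ sv V (fun x => sg (sympl n x y)) := by
  rw [sv_char]
  split_ifs
  exacts [Nat.cast_nonneg _, le_rfl]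

theorem sum_dt (b : EE n) : ∑ a : EE n, sg (dt a b) = if b = 0 then (2 : ℝ) ^ n else 0 := by
  split_ifs with h
  · subst h
    simp [dt, sg_zero]
  · obtain ⟨c, hc⟩ := dt_nondeg b h
    have h1 : ∑ a : EE n, sg (dt (a + c) b) = ∑ a : EE n, sg (dt a b) :=
      Equiv.sum_comp (Equiv.addRight c) (fun a => sg (dt a b))
    have h2 : ∑ a : EE n, sg (dt (a + c) b) = - ∑ a : EE n, sg (dt a b) := by
      rw [← Finset.sum_neg_distrib]
      refine Finset.sum_congr rfl fun a _ => ?_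
      rw [dt_add_left, sg_add, hc, sg_one]; ring
    linarith

noncomputable def AA (f : EE n → ℂ) (x : GG n) : ℂ :=
  ∑ y, f y * conj (f (y + x.1)) * (sg (dt x.2 y) : ℂ)

theorem charDist_eq (f : EE n → ℂ) (x : GG n) : charDist n f x = ((2:ℝ)^n)⁻¹ * ‖AA f x‖ ^ 2 := by
  unfold charDist AA
  simp only [sg_cast, dt]

theorem nsq (z : ℂ) : ((‖z‖ ^ 2 : ℝ) : ℂ) = z * conj z := by
  rw [Complex.mul_conj, Complex.normSq_eq_norm_sq]

theorem AA_sq (f : EE n → ℂ) (y : GG n) : ((‖AA f y‖ ^ 2 : ℝ) : ℂ) =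
    ∑ u, ∑ v, f u * conj (f (u + y.1)) * conj (f v) * f (v + y.1) * (sg (dt y.2 (u + v)) : ℂ) := by
  rw [nsq, AA, map_sum, Finset.sum_mul_sum]
  refine Finset.sum_congr rfl fun u _ => Finset.sum_congr rfl fun v _ => ?_
  simp only [map_mul, Complex.conj_conj, Complex.conj_ofReal, dt_add_right, sg_add, Complex.ofReal_mul]
  ring

theorem duality_aux (f : EE n → ℂ) (x : GG n) :
    ∑ y : GG n, ‖AA f y‖ ^ 2 * sg (sympl n x y) = (2 : ℝ) ^ n * ‖AA f x‖ ^ 2 := by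
  have key : ((∑ y : GG n, ‖AA f y‖ ^ 2 * sg (sympl n x y) : ℝ) : ℂ) =
      (((2 : ℝ) ^ n * ‖AA f x‖ ^ 2 : ℝ) : ℂ) := by
    rw [Complex.ofReal_mul, AA_sq, Complex.ofReal_sum]
    simp_rw [Complex.ofReal_mul, AA_sq]
    rw [Fintype.sum_prod_type]
    have h1 : ∀ y1 : EE n, (∑ y2 : EE n, (∑ u, ∑ v, f u * conj (f (u + y1)) * conj (f v) *
        f (v + y1) * (sg (dt y2 (u + v)) : ℂ)) * (sg (sympl n x (y1, y2)) : ℂ)) =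
        ∑ u, (2 : ℂ) ^ n * (f u * conj (f (u + y1)) * conj (f (u + x.1)) *
        f (u + x.1 + y1) * (sg (dt x.2 y1) : ℂ)) := by
      intro y1
      simp_rw [Finset.sum_mul]
      rw [Finset.sum_comm]
      refine Finset.sum_congr rfl fun u _ => ?_
      rw [Finset.sum_comm]
      have h2 : ∀ v, (∑ y2 : EE n, f u * conj (f (u + y1)) * conj (f v) *
        f (v + y1) * (sg (dt y2 (u + v)) : ℂ) * (sg (sympl n x (y1, y2)) : ℂ)) =
          (f u * conj (f (u + y1)) * conj (f v) * f (v + y1) * (sg (dt x.2 y1) : ℂ)) *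
            (if v = u + x.1 then (2:ℂ)^n else 0) := by
        intro v
        have h3 := sum_dt (u + v + x.1)
        have h4 : u + v + x.1 = 0 ↔ v = u + x.1 := by
          constructor
          · intro h
            have := c2 u
            have := c2 x.1
            grind
          · rintro rfl
            have := c2 u
            have := c2 x.1
            grind
        have h5 : ((∑ a : EE n, sg (dt a (u + v + x.1)) : ℝ) : ℂ) = if v = u + x.1 then (2:ℂ)^n else 0 := by
          rw [h3]
          simp only [h4]
          split_ifs <;> simp
        rw [← h5, Complex.ofReal_sum, Finset.mul_sum]
        refine Finset.sum_congr rfl fun y2 _ => ?_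
        simp only [sympl_eq, dt_add_right, sg_add, dt_comm x.1 y2, Complex.ofReal_mul]
        ring
      simp_rw [h2]
      simp
      ring
    simp_rw [h1]
    rw [Finset.sum_comm, Finset.mul_sum]
    refine Finset.sum_congr rfl fun u _ => ?_
    rw [← Finset.mul_sum]
    push_cast
    congr 1
    rw [← Equiv.sum_comp (Equiv.addLeft u)]
    refine Finset.sum_congr rfl fun v _ => ?_
    simp only [Equiv.coe_addLeft, cancel_l]
    have e : u + x.1 + (u + v) = v + x.1 := by
      rw [show u + x.1 + (u + v) = u + (u + (v + x.1)) by abel, cancel_l]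
    rw [e]
    ring
  exact_mod_cast key

end Quantum

section Quantum2
open scoped Classical
open scoped ComplexConjugate
variable {n : ℕ}

def perp1 (V : Submodule (ZMod 2) (GG n)) (a : GG n) : Submodule (ZMod 2) (GG n) where
  carrier := {y | y ∈ V ∧ sympl n y a = 0}
  add_mem' := fun {x y} hx hy => ⟨V.add_mem hx.1 hy.1, by rw [sympl_add_left, hx.2, hy.2, add_zero]⟩
  zero_mem' := ⟨V.zero_mem, sympl_zero_left a⟩
  smul_mem' := fun c x hx => ⟨V.smul_mem c hx.1, by rw [sympl_smul_left, hx.2, mul_zero]⟩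

theorem mem_perp1 {V : Submodule (ZMod 2) (GG n)} {a y : GG n} :
    y ∈ perp1 V a ↔ y ∈ V ∧ sympl n y a = 0 := Iff.rfl

theorem sv_split (V : Submodule (ZMod 2) (GG n)) {a b : GG n} (hb : b ∈ V) (hab : sympl n b a = 1)
    (F : GG n → ℝ) : sv V F = sv (perp1 V a) F + sv (perp1 V a) (fun y => F (y + b)) := by
  have h11 : (1 : ZMod 2) + 1 = 0 := by decide
  unfold sv
  rw [← Equiv.sum_comp (Equiv.addRight b) (fun y => if y ∈ perp1 V a then F (y + b) else 0),
    ← Finset.sum_add_distrib]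
  refine Finset.sum_congr rfl fun y _ => ?_
  simp only [Equiv.coe_addRight, cancel_r, mem_perp1, Submodule.add_mem_iff_left V hb,
    sympl_add_left, hab]
  by_cases hy : y ∈ V
  · rcases zmod2_cases (sympl n y a) with h | h <;> simp [hy, h, h11]
  · simp [hy]

variable {p : GG n → ℝ}

theorem p_char_nonneg (h0 : ∀ x, 0 ≤ p x)
    (hd : ∀ x, ∑ y, p y * sg (sympl n x y) = (2:ℝ)^n * p x) (V : Submodule (ZMod 2) (GG n))
    (a : GG n) : 0 ≤ sv V (fun x => p x * sg (sympl n x a)) := by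
  have e : (2:ℝ)^n * sv V (fun x => p x * sg (sympl n x a)) =
      ∑ y, p y * sv V (fun x => sg (sympl n x (y + a))) := by
    rw [← sv_mul]
    simp_rw [← sv_mul]
    rw [← sv_sum]
    refine sv_congr V fun x _ => ?_
    rw [← mul_assoc, ← hd, Finset.sum_mul]
    refine Finset.sum_congr rfl fun y _ => ?_
    rw [sympl_add_right, sg_add]; ring
  have h1 : 0 ≤ (2:ℝ)^n * sv V (fun x => p x * sg (sympl n x a)) := by
    rw [e]
    exact Finset.sum_nonneg fun y _ => mul_nonneg (h0 y) (sv_char_nonneg V _)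
  exact nonneg_of_mul_nonneg_right h1 (by positivity)

theorem p_coset (h0 : ∀ x, 0 ≤ p x)
    (hd : ∀ x, ∑ y, p y * sg (sympl n x y) = (2:ℝ)^n * p x) (V : Submodule (ZMod 2) (GG n))
    (a : GG n) : (∑ t, if t + a ∈ V then p t else 0) ≤ sv V p := by
  have e0 : (∑ t, if t + a ∈ V then p t else 0) = sv V (fun y => p (y + a)) := by
    unfold sv
    rw [← Equiv.sum_comp (Equiv.addRight a)]
    simp only [Equiv.coe_addRight, cancel_r]
  have e : ∀ b, (2:ℝ)^n * sv V (fun x => p (x + b)) =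
      ∑ y, p y * sg (sympl n b y) * sv V (fun x => sg (sympl n x y)) := by
    intro b
    rw [← sv_mul]
    simp_rw [← sv_mul]
    rw [← sv_sum]
    refine sv_congr V fun x _ => ?_
    rw [← hd]
    refine Finset.sum_congr rfl fun y _ => ?_
    rw [sympl_add_left, sg_add]; ring
  have e1 := e a
  have e2 := e 0
  simp only [add_zero, sympl_zero_left, sg_zero, mul_one] at e2
  rw [e0]
  have h1 : (2:ℝ)^n * sv V (fun x => p (x + a)) ≤ (2:ℝ)^n * sv V (fun x => p x) := by
    rw [e1, e2]
    refine Finset.sum_le_sum fun y _ => ?_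
    refine mul_le_mul_of_nonneg_right ?_ (sv_char_nonneg V _)
    exact mul_le_of_le_one_right (h0 y) (sg_le _)
  exact le_of_mul_le_mul_left h1 (by positivity)

theorem p_half (h0 : ∀ x, 0 ≤ p x)
    (hd : ∀ x, ∑ y, p y * sg (sympl n x y) = (2:ℝ)^n * p x) (V : Submodule (ZMod 2) (GG n))
    (a : GG n) : sv V p ≤ 2 * sv (perp1 V a) p := by
  have h1 := p_char_nonneg h0 hd V a
  have h2 : 2 * sv (perp1 V a) p = sv V p + sv V (fun x => p x * sg (sympl n x a)) := by
    unfold sv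
    rw [Finset.mul_sum, ← Finset.sum_add_distrib]
    refine Finset.sum_congr rfl fun y _ => ?_
    simp only [mem_perp1]
    by_cases hy : y ∈ V
    · rcases zmod2_cases (sympl n y a) with h | h <;> simp [hy, h, sg_zero, sg_one]
      ring
    · simp [hy]
  linarith

section Op
variable {H : Type*} [NormedAddCommGroup H] [InnerProductSpace ℂ H]

theorem sq_par (s t : ℂ) : ‖(1/2 : ℂ) * (s + t)‖ ^ 2 + ‖(1/2 : ℂ) * (s - t)‖ ^ 2 =
    (‖s‖ ^ 2 + ‖t‖ ^ 2) / 2 := by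
  have := parallelogram_law_with_norm ℂ s t
  simp only [norm_mul, mul_pow]
  norm_num
  nlinarith

/-- basic facts on a self-adjoint unitary -/
theorem op_step {W M : H →ₗ[ℂ] H} (hM2 : ∀ u, M (M u) = u)
    (hMi : ∀ u v, inner ℂ (M u) (M v) = inner ℂ u v) (hc : ∀ u, W (M u) = M (W u)) (φ ψ : H) :
    ‖inner ℂ ((1/2 : ℂ) • (φ + M φ)) (W ((1/2 : ℂ) • (ψ + M ψ)))‖ ^ 2 +
    ‖inner ℂ ((1/2 : ℂ) • (φ - M φ)) (W ((1/2 : ℂ) • (ψ - M ψ)))‖ ^ 2 =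
    (‖inner ℂ φ (W ψ)‖ ^ 2 + ‖inner ℂ φ (W (M ψ))‖ ^ 2) / 2 := by
  have hh : (starRingEnd ℂ) (1/2 : ℂ) = 1/2 := by
    have := Complex.conj_ofReal (1/2)
    push_cast at this
    exact this
  have a1 : inner ℂ (M φ) (W (M ψ)) = inner ℂ φ (W ψ) := by rw [hc, hMi]
  have a2 : inner ℂ (M φ) (W ψ) = inner ℂ φ (W (M ψ)) := by
    rw [hc, ← hMi φ, hM2]
  have e1 : inner ℂ ((1/2 : ℂ) • (φ + M φ)) (W ((1/2 : ℂ) • (ψ + M ψ))) =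
      (1/2 : ℂ) * (inner ℂ φ (W ψ) + inner ℂ φ (W (M ψ))) := by
    simp only [map_smul, map_add, inner_smul_left, inner_smul_right, inner_add_left,
      inner_add_right, a1, a2, hh]
    ring
  have e2 : inner ℂ ((1/2 : ℂ) • (φ - M φ)) (W ((1/2 : ℂ) • (ψ - M ψ))) =
      (1/2 : ℂ) * (inner ℂ φ (W ψ) - inner ℂ φ (W (M ψ))) := by
    simp only [map_smul, map_sub, inner_smul_left, inner_smul_right, inner_sub_left,
      inner_sub_right, a1, a2, hh]
    ring
  rw [e1, e2, sq_par]

theorem norm_split {M : H →ₗ[ℂ] H} (hMn : ∀ u, ‖M u‖ = ‖u‖) (φ : H) :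
    ‖(1/2 : ℂ) • (φ + M φ)‖ ^ 2 + ‖(1/2 : ℂ) • (φ - M φ)‖ ^ 2 = ‖φ‖ ^ 2 := by
  have := parallelogram_law_with_norm ℂ φ (M φ)
  rw [hMn] at this
  simp only [norm_smul, mul_pow]
  norm_num
  nlinarith

theorem exists_isotropic (h0 : ∀ x, 0 ≤ p x)
    (hd : ∀ x, ∑ y, p y * sg (sympl n x y) = (2:ℝ)^n * p x)
    (W : GG n → H →ₗ[ℂ] H) (ε : GG n → GG n → ZMod 2)
    (hε : ∀ x y, ε x y + ε y x = sympl n x y)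
    (hW0 : ∀ u, W 0 u = u)
    (hWi : ∀ y u v, inner ℂ (W y u) (W y v) = inner ℂ u v)
    (hWm : ∀ x y u, W (x + y) u = ((sg (ε x y) : ℝ) : ℂ) • W x (W y u)) :
    ∀ (N : ℕ) (V : Submodule (ZMod 2) (GG n)), Nat.card V = N →
    ∃ I : Submodule (ZMod 2) (GG n), I ≤ V ∧ (∀ x ∈ I, ∀ y ∈ I, sympl n x y = 0) ∧
      sv V p * Nat.card I ≤ sv I p * Nat.card V ∧
      ∀ φ ψ : H, sv V (fun y => ‖inner ℂ φ (W y ψ)‖ ^ 2) ≤ Nat.card I * (‖φ‖ ^ 2 * ‖ψ‖ ^ 2) := by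
  have hWn : ∀ y u, ‖W y u‖ = ‖u‖ := fun y u => by
    have := hWi y u u
    rw [inner_self_eq_norm_sq_to_K, inner_self_eq_norm_sq_to_K] at this
    have h2 : ‖W y u‖ ^ 2 = ‖u‖ ^ 2 := by exact_mod_cast this
    exact (pow_left_inj₀ (norm_nonneg _) (norm_nonneg _) two_ne_zero).1 h2
  intro N
  induction N using Nat.strong_induction_on with
  | _ N ih =>
  intro V hVN
  by_cases hiso : ∀ x ∈ V, ∀ y ∈ V, sympl n x y = 0
  · refine ⟨V, le_rfl, hiso, le_rfl, fun φ ψ => ?_⟩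
    rw [← sv_const]
    refine sv_le V fun y _ => ?_
    rw [← mul_pow]
    refine pow_le_pow_left₀ (norm_nonneg _) ?_ 2
    refine (norm_inner_le_norm φ (W y ψ)).trans (le_of_eq ?_)
    rw [hWn]
  · push Not at hiso
    obtain ⟨b, hb, a, ha, hab⟩ := hiso
    have hab1 := (zmod2_cases _).resolve_left hab
    have haV : a ∈ perp1 V a := ⟨ha, sympl_self a⟩
    have hcard : (Nat.card V : ℝ) = 2 * Nat.card (perp1 V a) := by
      have := sv_split V hb hab1 (fun _ => 1)
      simp only [sv_const] at this
      linarith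
    have hpos : 0 < Nat.card (perp1 V a) := Nat.card_pos
    have hcardN : Nat.card V = 2 * Nat.card (perp1 V a) := by exact_mod_cast hcard
    obtain ⟨I, hIV, hI, hI2, hI3⟩ := ih (Nat.card (perp1 V a)) (by omega) (perp1 V a) rfl
    refine ⟨I, fun x hx => (hIV hx).1, hI, ?_, fun φ ψ => ?_⟩
    · have h1 := p_half h0 hd V a
      have h2 : (0:ℝ) ≤ Nat.card I := Nat.cast_nonneg _
      rw [hcard]
      nlinarith
    · -- the self-adjoint unitary
      obtain ⟨ω, hω1, hω2⟩ : ∃ ω : ℂ, ‖ω‖ = 1 ∧ ω * ω * ((sg (ε a a) : ℝ) : ℂ) = 1 := by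
        rcases zmod2_cases (ε a a) with h | h
        · exact ⟨1, by simp, by simp [h, sg_zero]⟩
        · exact ⟨Complex.I, by simp, by simp [h, sg_one]⟩
      have hsc : ∀ z : ZMod 2, ((sg z : ℝ) : ℂ) * ((sg z : ℝ) : ℂ) = 1 := fun z => by
        rw [← Complex.ofReal_mul, sg_sq, Complex.ofReal_one]
      have hωc : conj ω * ω = 1 := by
        rw [mul_comm, Complex.mul_conj, Complex.normSq_eq_norm_sq, hω1]; simp
      let M : H →ₗ[ℂ] H := ω • W a
      have hM : ∀ u, M u = ω • W a u := fun u => rfl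
      have hWaa : ∀ u, W a (W a u) = ((sg (ε a a) : ℝ) : ℂ) • u := fun u => by
        have := hWm a a u
        rw [c2, hW0] at this
        conv_rhs => rw [this]
        rw [smul_smul, hsc, one_smul]
      have hM2 : ∀ u, M (M u) = u := fun u => by
        rw [hM, hM, map_smul, hWaa, smul_smul, smul_smul, hω2, one_smul]
      have hMi : ∀ u v, inner ℂ (M u) (M v) = inner ℂ u v := fun u v => by
        rw [hM, hM, inner_smul_left, inner_smul_right, hWi, ← mul_assoc, hωc, one_mul]
      have hMn : ∀ u, ‖M u‖ = ‖u‖ := fun u => by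
        rw [hM, norm_smul, hω1, one_mul, hWn]
      have hcom : ∀ x y u, W x (W y u) = ((sg (sympl n x y) : ℝ) : ℂ) • W y (W x u) := by
        intro x y u
        have e1 := hWm x y u
        have e2 := hWm y x u
        rw [add_comm y x, e1] at e2
        have e3 := congrArg (fun v => ((sg (ε x y) : ℝ) : ℂ) • v) e2
        simp only [smul_smul, hsc, one_smul] at e3
        rw [e3, ← Complex.ofReal_mul, ← sg_add, hε]
      have hshift : ∀ y u b, ‖inner ℂ φ (W y (W b u))‖ = ‖inner ℂ φ (W (y + b) u)‖ := by
        intro y u b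
        rw [hWm, inner_smul_right, norm_mul, Complex.norm_real, Real.norm_eq_abs, sg_abs, one_mul]
      -- splitting over the eigenspaces
      have hB : ∀ χ : H, sv (perp1 V a) (fun y => ‖inner ℂ φ (W y χ)‖ ^ 2) ≤
          Nat.card I * (‖(1/2 : ℂ) • (φ + M φ)‖ ^ 2 * ‖(1/2 : ℂ) • (χ + M χ)‖ ^ 2) +
          Nat.card I * (‖(1/2 : ℂ) • (φ - M φ)‖ ^ 2 * ‖(1/2 : ℂ) • (χ - M χ)‖ ^ 2) := by
        intro χ
        refine le_trans (le_of_eq ?_) (add_le_add (hI3 _ _) (hI3 _ _))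
        rw [← sv_add]
        have e1 : sv (perp1 V a) (fun y => ‖inner ℂ φ (W y (M χ))‖ ^ 2) =
            sv (perp1 V a) (fun y => ‖inner ℂ φ (W y χ)‖ ^ 2) := by
          rw [← sv_shift _ (fun y => ‖inner ℂ φ (W y χ)‖ ^ 2) haV]
          refine sv_congr _ fun y _ => ?_
          rw [hM, map_smul, inner_smul_right, norm_mul, hω1, one_mul, hshift]
        have e2 : sv (perp1 V a) (fun y => ‖inner ℂ φ (W y χ)‖ ^ 2) =
            sv (perp1 V a) (fun y => (1/2) * (‖inner ℂ φ (W y χ)‖ ^ 2 +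
              ‖inner ℂ φ (W y (M χ))‖ ^ 2)) := by
          rw [sv_mul, sv_add, e1]; ring
        rw [e2]
        refine sv_congr _ fun y hy => ?_
        rw [op_step hM2 hMi (fun u => ?_)]
        · ring
        · rw [hM, hM, map_smul, hcom y a, hy.2, sg_zero, Complex.ofReal_one, one_smul]
      rw [sv_split V hb hab1]
      have f1 := hB ψ
      have f2 := hB (W b ψ)
      have f3 : sv (perp1 V a) (fun y => ‖inner ℂ φ (W y (W b ψ))‖ ^ 2) =
          sv (perp1 V a) (fun y => ‖inner ℂ φ (W (y + b) ψ)‖ ^ 2) := by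
        refine sv_congr _ fun y _ => ?_
        rw [hshift]
      have hanti : M (W b ψ) = - W b (M ψ) := by
        rw [hM, hM, map_smul, hcom b a, hab1, sg_one]
        simp
      have g1 : ‖(1/2 : ℂ) • (W b ψ + M (W b ψ))‖ = ‖(1/2 : ℂ) • (ψ - M ψ)‖ := by
        rw [hanti, ← sub_eq_add_neg, ← map_sub, ← map_smul, hWn]
      have g2 : ‖(1/2 : ℂ) • (W b ψ - M (W b ψ))‖ = ‖(1/2 : ℂ) • (ψ + M ψ)‖ := by
        rw [hanti, sub_neg_eq_add, ← map_add, ← map_smul, hWn]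
      rw [f3, g1, g2] at f2
      have n1 := norm_split hMn φ
      have n2 := norm_split hMn ψ
      refine (add_le_add f1 f2).trans (le_of_eq ?_)
      rw [← n1, ← n2]
      ring

end Op
end Quantum2

section Quantum3
open scoped Classical
open scoped ComplexConjugate
variable {n : ℕ}

noncomputable def WW (y : GG n) : EuclideanSpace ℂ (EE n) →ₗ[ℂ] EuclideanSpace ℂ (EE n) where
  toFun u := WithLp.toLp 2 (fun x => ((sg (dt y.2 x) : ℝ) : ℂ) * u (x + y.1))
  map_add' u v := by
    ext x
    simp [mul_add]
  map_smul' c u := by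
    ext x
    simp
    ring

theorem WW_apply (y : GG n) (u : EuclideanSpace ℂ (EE n)) (x : EE n) :
    WW y u x = ((sg (dt y.2 x) : ℝ) : ℂ) * u (x + y.1) := rfl

theorem WW_zero (u : EuclideanSpace ℂ (EE n)) : WW 0 u = u := by
  ext x
  rw [WW_apply]
  simp [dt, sg_zero]

theorem WW_mul (x y : GG n) (u : EuclideanSpace ℂ (EE n)) :
    WW (x + y) u = ((sg (dt y.2 x.1) : ℝ) : ℂ) • WW x (WW y u) := by
  ext z
  have h : ((sg (dt y.2 x.1) : ℝ) : ℂ) * ((sg (dt y.2 x.1) : ℝ) : ℂ) = 1 := by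
    rw [← Complex.ofReal_mul, sg_sq, Complex.ofReal_one]
  rw [PiLp.smul_apply, WW_apply, WW_apply, WW_apply, smul_eq_mul]
  simp only [Prod.fst_add, Prod.snd_add, dt_add_left, dt_add_right, sg_add, Complex.ofReal_mul,
    add_assoc]
  linear_combination (-((sg (dt x.2 z) : ℝ) : ℂ) * ((sg (dt y.2 z) : ℝ) : ℂ) * u (z + (x.1 + y.1))) * h

theorem WW_inner (y : GG n) (u v : EuclideanSpace ℂ (EE n)) :
    inner ℂ (WW y u) (WW y v) = inner ℂ u v := by
  rw [PiLp.inner_apply, PiLp.inner_apply]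
  rw [← Equiv.sum_comp (Equiv.addRight y.1) (fun x => inner ℂ (u x) (v x))]
  refine Finset.sum_congr rfl fun x _ => ?_
  have h : ((sg (dt y.2 x) : ℝ) : ℂ) * ((sg (dt y.2 x) : ℝ) : ℂ) = 1 := by
    rw [← Complex.ofReal_mul, sg_sq, Complex.ofReal_one]
  simp only [WW_apply, Equiv.coe_addRight, RCLike.inner_apply, map_mul, Complex.conj_ofReal]
  linear_combination (v (x + y.1) * conj (u (x + y.1))) * h

theorem norm_AA (f : EE n → ℂ) (y : GG n) :
    ‖AA f y‖ = ‖inner ℂ (WithLp.toLp 2 f) (WW y (WithLp.toLp 2 f))‖ := by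
  rw [norm_inner_symm, PiLp.inner_apply]
  congr 1
  unfold AA
  refine Finset.sum_congr rfl fun x _ => ?_
  simp only [WW_apply, RCLike.inner_apply, map_mul, Complex.conj_ofReal]
  ring


theorem cd_nonneg (f : EE n → ℂ) (x : GG n) : 0 ≤ charDist n f x := by
  rw [charDist_eq]; positivity

theorem cd_dual (f : EE n → ℂ) (x : GG n) :
    ∑ y, charDist n f y * sg (sympl n x y) = (2:ℝ)^n * charDist n f x := by
  simp_rw [charDist_eq, mul_assoc]
  rw [← Finset.mul_sum, duality_aux]
  field_simp

theorem cd_zero {f : EE n → ℂ} (hf : ∑ x, ‖f x‖ ^ 2 = 1) : (2:ℝ)^n * charDist n f 0 = 1 := by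
  have : AA f 0 = 1 := by
    unfold AA
    have h2 : ((∑ x, ‖f x‖ ^ 2 : ℝ) : ℂ) = 1 := by rw [hf]; simp
    rw [← h2, Complex.ofReal_sum]
    refine Finset.sum_congr rfl fun x _ => ?_
    rw [nsq]
    simp [dt, sg_zero]
  rw [charDist_eq, this]
  simp

theorem cd_isP {f : EE n → ℂ} (hf : ∑ x, ‖f x‖ ^ 2 = 1) : IsP (charDist n f) := by
  refine ⟨cd_nonneg f, ?_⟩
  have := cd_dual f 0
  rw [cd_zero hf] at this
  simpa [sympl_zero_left, sg_zero] using this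

theorem cd_le {f : EE n → ℂ} (hf : ∑ x, ‖f x‖ ^ 2 = 1) (x : GG n) :
    (2:ℝ)^n * charDist n f x ≤ 1 := by
  rw [← cd_dual, ← (cd_isP hf).2]
  exact Finset.sum_le_sum fun y _ => mul_le_of_le_one_right (cd_nonneg f y) (sg_le _)

/-- extension of isotropic subspaces to Lagrangian ones -/
theorem exists_lagrangian (I : Submodule (ZMod 2) (GG n)) (hI : ∀ x ∈ I, ∀ y ∈ I, sympl n x y = 0) :
    ∃ L, I ≤ L ∧ IsLagrangian n L := by
  obtain ⟨L, hIL, hL⟩ := (Set.toFinite {L : Submodule (ZMod 2) (GG n) |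
    ∀ x ∈ L, ∀ y ∈ L, sympl n x y = 0}).exists_le_maximal hI
  refine ⟨L, hIL, ?_, hL.prop⟩
  have hiso : ∀ x ∈ L, ∀ y ∈ L, sympl n x y = 0 := hL.prop
  have hperp : ∀ z, (∀ x ∈ L, sympl n x z = 0) ↔ z ∈ L := by
    intro z
    refine ⟨fun hz => ?_, fun hz x hx => hiso x hx z hz⟩
    have h1 : ∀ x ∈ L ⊔ Submodule.span (ZMod 2) {z}, ∀ y ∈ L ⊔ Submodule.span (ZMod 2) {z},
        sympl n x y = 0 := by
      intro x hx y hy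
      obtain ⟨x1, hx1, x2, hx2, rfl⟩ := Submodule.mem_sup.1 hx
      obtain ⟨y1, hy1, y2, hy2, rfl⟩ := Submodule.mem_sup.1 hy
      obtain ⟨c, rfl⟩ := Submodule.mem_span_singleton.1 hx2
      obtain ⟨d, rfl⟩ := Submodule.mem_span_singleton.1 hy2
      rw [sympl_add_left, sympl_add_right, sympl_add_right, hiso _ hx1 _ hy1, sympl_comm x1,
        sympl_smul_left, sympl_comm z, hz _ hx1, sympl_smul_left, sympl_comm z, hz _ hy1,
        sympl_smul_left, sympl_comm z (d • z), sympl_smul_left, sympl_self]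
      simp
    have h2 := hL.le_of_ge (y := L ⊔ Submodule.span (ZMod 2) {z}) h1 le_sup_left
    exact h2 (Submodule.mem_sup_right (Submodule.mem_span_singleton_self z))
  have hc : (Nat.card L : ℝ) * Nat.card L = (2:ℝ)^n * (2:ℝ)^n := by
    have h1 : ∑ y : GG n, sv L (fun x => sg (sympl n x y)) = (Nat.card L : ℝ) * Nat.card L := by
      simp_rw [sv_char, hperp]
      exact sv_const L _
    have h2 : ∑ y : GG n, sv L (fun x => sg (sympl n x y)) = (2:ℝ)^n * (2:ℝ)^n := by
      rw [← sv_sum]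
      have h3 : ∀ x : GG n, ∑ y : GG n, sg (sympl n x y) = if x = 0 then (2:ℝ)^n * 2^n else 0 := by
        intro x
        split_ifs with hx
        · subst hx
          simp [sympl_zero_left, sg_zero]
        · obtain ⟨b, hb⟩ := sympl_nondeg x hx
          have e1 : ∑ y : GG n, sg (sympl n x (y + b)) = ∑ y : GG n, sg (sympl n x y) :=
            Equiv.sum_comp (Equiv.addRight b) (fun y => sg (sympl n x y))
          have e2 : ∑ y : GG n, sg (sympl n x (y + b)) = - ∑ y : GG n, sg (sympl n x y) := by
            rw [← Finset.sum_neg_distrib]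
            refine Finset.sum_congr rfl fun y _ => ?_
            rw [sympl_add_right, sg_add, sympl_comm x b, hb, sg_one]; ring
          linarith
      simp_rw [h3]
      unfold sv
      rw [Finset.sum_eq_single 0]
      · simp
      · intro b _ hb; simp [hb]
      · simp
    rw [← h1, h2]
  have hc2 : Nat.card L * Nat.card L = 2 ^ n * 2 ^ n := by exact_mod_cast hc
  have hc3 : Nat.card L = 2 ^ n := Nat.mul_self_inj.1 hc2
  have hc4 := Module.card_eq_pow_finrank (K := ZMod 2) (V := L)
  rw [← Nat.card_eq_fintype_card, hc3, ZMod.card] at hc4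
  exact (Nat.pow_right_injective le_rfl hc4).symm

theorem quantum {f : EE n → ℂ} (hf : ∑ x, ‖f x‖ ^ 2 = 1) (V : Submodule (ZMod 2) (GG n)) (a : GG n) :
    ∃ L, IsLagrangian n L ∧ (∑ t, if t + a ∈ V then charDist n f t else 0) ^ 2 * 2 ^ n / Nat.card V ≤
      sv L (charDist n f) := by
  have h0 := cd_nonneg f
  have hd := cd_dual f
  obtain ⟨I, hIV, hI, h1, h2⟩ := exists_isotropic h0 hd WW (fun x y => dt y.2 x.1)
    (fun x y => by rw [sympl_eq, dt_comm y.2]) WW_zero WW_inner WW_mul _ V rfl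
  obtain ⟨L, hIL, hL⟩ := exists_lagrangian I hI
  refine ⟨L, hL, ?_⟩
  have h3 := p_coset h0 hd V a
  have h4 := sv_mono hIL h0
  have h5 := h2 (WithLp.toLp 2 f) (WithLp.toLp 2 f)
  have h6 : ‖WithLp.toLp 2 f‖ ^ 2 = 1 := by
    rw [EuclideanSpace.norm_sq_eq]
    exact hf
  rw [h6] at h5
  have h7 : (2:ℝ)^n * sv V (charDist n f) ≤ Nat.card I := by
    rw [← sv_mul]
    refine le_trans (le_of_eq ?_) (h5.trans (by simp))
    refine sv_congr V fun y _ => ?_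
    rw [charDist_eq, norm_AA]
    field_simp
  have hM : 0 ≤ ∑ t, if t + a ∈ V then charDist n f t else 0 :=
    Finset.sum_nonneg fun t _ => by split_ifs; exacts [h0 t, le_rfl]
  have hVc : (0:ℝ) < Nat.card V := by exact_mod_cast Nat.card_pos
  refine le_trans ?_ h4
  rw [div_le_iff₀ hVc]
  refine le_trans ?_ h1
  have h8 : (∑ t, if t + a ∈ V then charDist n f t else 0) ^ 2 ≤ sv V (charDist n f) ^ 2 :=
    pow_le_pow_left₀ hM h3 2
  have h9 : 0 ≤ sv V (charDist n f) := sv_nonneg V h0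
  calc _ ≤ sv V (charDist n f) ^ 2 * 2 ^ n := mul_le_mul_of_nonneg_right h8 (by positivity)
    _ = sv V (charDist n f) * (2 ^ n * sv V (charDist n f)) := by ring
    _ ≤ _ := mul_le_mul_of_nonneg_left h7 h9

theorem sv_eq_sum (L : Submodule (ZMod 2) (GG n)) (F : GG n → ℝ) : sv L F = ∑ x : L, F x := by
  unfold sv
  rw [← Finset.sum_filter]
  exact Finset.sum_subtype _ (by simp) _

end Quantum3

section Main
open scoped Classical
variable {Ω β : Type*} [Fintype Ω] [Fintype β]
variable {G : Type*} [AddCommGroup G] [Module (ZMod 2) G] [Fintype G]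

theorem avg_rd {μ : Ω → ℝ} (h : IsP μ) (U V W : Ω → G) (hW : ∀ ω, W ω = U ω + V ω)
    (hsym : law μ (fun ω => (V ω, (W ω, ()))) = law μ (fun ω => (U ω, (W ω, ())))) :
    ∑ c, law μ (fun ω => (W ω, ())) c *
      rd (cl μ U (fun ω => (W ω, ())) c) (cl μ U (fun ω => (W ω, ())) c) ≤
    2 * Hh μ U + 2 * Hh μ V - 2 * Hh μ (fun ω => (U ω, V ω)) + Hh μ W
      - (Hh μ (fun ω => (U ω, V ω)) - Hh μ W) := by
  have hb := bsg h U V W (fun _ => ()) hW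
  have e1 : Hh μ (fun ω => (U ω, ())) = Hh μ U :=
    Hh_rename Prod.fst (fun a => (a, ())) (by simp) (by simp)
  have e2 : Hh μ (fun ω => (V ω, ())) = Hh μ V :=
    Hh_rename Prod.fst (fun a => (a, ())) (by simp) (by simp)
  have e3 : Hh μ (fun ω => (W ω, ())) = Hh μ W :=
    Hh_rename Prod.fst (fun a => (a, ())) (by simp) (by simp)
  have e4 : Hh μ (fun ω => (U ω, (V ω, ()))) = Hh μ (fun ω => (U ω, V ω)) :=
    Hh_rename (fun a => (a.1, a.2.1)) (fun a => (a.1, (a.2, ()))) (by simp) (by simp)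
  have e5 : Hh μ (fun ω => (U ω, (W ω, ()))) = Hh μ (fun ω => (U ω, V ω)) :=
    Hh_rename (fun a => (a.1, a.1 + a.2.1)) (fun a => (a.1, (a.1 + a.2, ())))
      (by intro ω; simp [hW, cancel_l]) (by intro ω; simp [hW])
  rw [Hh_unit h] at hb
  set C : Ω → G × Unit := fun ω => (W ω, ()) with hC
  have hcc := cc_isP h C
  have key : ∀ c, law μ C c ≠ 0 → conv (cl μ U C c) (cl μ U C c) =
      cl (cc μ C) (fun ω => U ω.1 + V ω.2) (fun ω => C ω.1) c := by
    intro c hc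
    have l1 : law (cc μ C) (fun ω => C ω.1) = law μ C := cc_law_fst h C C
    have := cl_conv (cc_CI h C U V) (c := c) (by rw [l1]; exact hc)
    rw [← this]
    have a1 : cl (cc μ C) (fun ω => U ω.1) (fun ω => C ω.1) c = cl μ U C c := by
      have := cc_law_fst h C (fun ω => (U ω, C ω))
      funext t
      simp only [cl]
      rw [l1, this]
    have a2 : cl (cc μ C) (fun ω => V ω.2) (fun ω => C ω.1) c = cl μ U C c := by
      have h1 := cc_law_snd h C (fun ω => (V ω, C ω))
      have h2 : law (cc μ C) (fun ω => (V ω.2, C ω.1)) = law (cc μ C) (fun ω => (V ω.2, C ω.2)) :=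
        law_congr (fun ω hω => by rw [cc_supp hω])
      funext t
      simp only [cl]
      rw [l1, h2, h1, hsym]
    rw [a1, a2]
  have s1 := sum_ent_cl hcc (fun ω => U ω.1 + V ω.2) (fun ω => C ω.1)
  have s2 := sum_ent_cl h U C
  have l1 : law (cc μ C) (fun ω => C ω.1) = law μ C := cc_law_fst h C C
  have l2 : Hh (cc μ C) (fun ω => C ω.1) = Hh μ C := Hh_cc_fst h C C
  rw [l1, l2] at s1
  have : ∑ c, law μ C c * rd (cl μ U C c) (cl μ U C c) =
      ∑ c, law μ C c * ent (cl (cc μ C) (fun ω => U ω.1 + V ω.2) (fun ω => C ω.1) c)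
      - ∑ c, law μ C c * ent (cl μ U C c) := by
    rw [← Finset.sum_sub_distrib]
    refine Finset.sum_congr rfl fun c _ => ?_
    by_cases hc : law μ C c = 0
    · simp [hc]
    · rw [rd, key c hc]; ring
  rw [this, s1, s2]
  linarith

theorem avg_log {α : Type*} [Fintype α] {r u : α → ℝ} (hr : IsP r) {γ : ℝ} (hγ : 0 < γ)
    (hu : ∀ x, r x ≠ 0 → 0 < u x) (hs : ∑ x, r x * (γ / u x) ≤ 1) :
    Real.log γ ≤ ∑ x, r x * Real.log (u x) := by
  have : ∑ x, r x * (Real.log γ + 1 - γ / u x) ≤ ∑ x, r x * Real.log (u x) := by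
    refine Finset.sum_le_sum fun x _ => ?_
    by_cases hx : r x = 0
    · simp [hx]
    · refine mul_le_mul_of_nonneg_left ?_ (hr.1 x)
      have h1 := hu x hx
      have := Real.log_le_sub_one_of_pos (div_pos hγ h1)
      rw [Real.log_div hγ.ne' h1.ne'] at this
      linarith
  have e : ∑ x, r x * (Real.log γ + 1 - γ / u x) = Real.log γ + 1 - ∑ x, r x * (γ / u x) := by
    simp only [mul_sub, Finset.sum_sub_distrib, ← Finset.sum_mul, hr.2, one_mul]
  linarith


theorem exists_avg {α : Type*} [Fintype α] {r F : α → ℝ} (hr : IsP r) {A : ℝ}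
    (h : A ≤ ∑ c, r c * F c) : ∃ c, r c ≠ 0 ∧ A ≤ F c := by
  by_contra hcon
  push Not at hcon
  obtain ⟨a, ha⟩ := exists_ne_zero' hr
  have : ∑ c, r c * F c < ∑ c, r c * A := by
    refine Finset.sum_lt_sum (fun c _ => ?_) ⟨a, Finset.mem_univ _, ?_⟩
    · by_cases hc : r c = 0
      · simp [hc]
      · exact mul_le_mul_of_nonneg_left (hcon c hc).le (hr.1 c)
    · exact mul_lt_mul_of_pos_left (hcon a ha) (lt_of_le_of_ne (hr.1 a) (Ne.symm ha))
  rw [← Finset.sum_mul, hr.2, one_mul] at this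
  linarith

theorem combin {p : G → ℝ} (hp : IsP p) {K γ : ℝ} (hK : 0 < K) (hpK : ∀ x, K * p x ≤ 1)
    (hγ : 0 < γ) (hT : γ ≤ K * ∑ x, ∑ y, p x * p y * p (x + y)) :
    ∃ (V : Submodule (ZMod 2) G) (a : G), 0 < (∑ t, if t + a ∈ V then p t else 0) ∧
      334 * Real.log γ ≤ 2 * Real.log (∑ t, if t + a ∈ V then p t else 0) + Real.log K
        - Real.log (Nat.card V) := by
  set T := ∑ x, ∑ y, p x * p y * p (x + y) with hTdef
  have hT0 : 0 < T := by
    by_contra hc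
    push Not at hc
    nlinarith
  have hTK : K * T ≤ 1 := by
    rw [hTdef, Finset.mul_sum]
    calc ∑ x, K * ∑ y, p x * p y * p (x + y) ≤ ∑ x, p x * ∑ y, p y := by
          refine Finset.sum_le_sum fun x _ => ?_
          rw [Finset.mul_sum, Finset.mul_sum]
          refine Finset.sum_le_sum fun y _ => ?_
          have h1 := mul_nonneg (hp.1 x) (hp.1 y)
          have h2 := hpK (x + y)
          nlinarith
      _ = 1 := by rw [hp.2]; simp [hp.2]
  set w : G × G → ℝ := fun ω => p ω.1 * p ω.2 * p (ω.1 + ω.2) / T with hwdef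
  have hw0 : ∀ ω, 0 ≤ w ω := fun ω =>
    div_nonneg (mul_nonneg (mul_nonneg (hp.1 _) (hp.1 _)) (hp.1 _)) hT0.le
  have hw : IsP w := by
    refine ⟨hw0, ?_⟩
    simp only [hwdef]
    rw [← Finset.sum_div, Fintype.sum_prod_type]
    exact div_self hT0.ne'
  set D : G → ℝ := fun z => ∑ x, p x * p (x + z) with hD
  have hD0 : ∀ z, 0 ≤ D z := fun z => Finset.sum_nonneg fun x _ => mul_nonneg (hp.1 _) (hp.1 _)
  have hDsum : ∑ z, D z = 1 := by
    simp only [hD]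
    rw [Finset.sum_comm]
    have : ∀ x, ∑ z, p x * p (x + z) = p x := by
      intro x
      rw [← Finset.mul_sum, show ∑ z, p (x + z) = ∑ z, p z from Equiv.sum_comp (Equiv.addLeft x) p, hp.2, mul_one]
    simp only [this, hp.2]
  set C : G × G → G × Unit := fun ω => (ω.1 + ω.2, ()) with hC
  have lUC : ∀ x c, law w (fun ω => (ω.1, C ω)) (x, c) = p x * p (x + c.1) * p c.1 / T := by
    rintro x ⟨z, u⟩
    unfold law
    rw [Finset.sum_eq_single (x, x + z)]
    · simp [hC, hwdef, cancel_l]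
    · rintro ⟨a, b⟩ _ hne
      rw [if_neg]
      intro he
      simp only [hC, Prod.mk.injEq] at he
      apply hne
      rw [← he.2.1, ← he.1, cancel_l]
    · simp
  have lVC : ∀ x c, law w (fun ω => (ω.2, C ω)) (x, c) = p x * p (x + c.1) * p c.1 / T := by
    rintro x ⟨z, u⟩
    unfold law
    rw [Finset.sum_eq_single (x + z, x)]
    · have : x + z + x = z := by rw [add_comm, cancel_l]
      simp [hC, hwdef, this]
      ring
    · rintro ⟨a, b⟩ _ hne
      rw [if_neg]
      intro he
      simp only [hC, Prod.mk.injEq] at he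
      apply hne
      rw [← he.2.1, ← he.1, add_comm a b, cancel_l]
    · simp
  have lC : ∀ c, law w C c = p c.1 * D c.1 / T := by
    intro c
    rw [← law_marg_snd w (fun ω => ω.1) C c]
    simp only [lUC, hD]
    rw [← Finset.sum_div, Finset.mul_sum]
    congr 1
    exact Finset.sum_congr rfl fun x _ => by ring
  have hCP := law_isP hw C
  have posC : ∀ c, law w C c ≠ 0 → 0 < p c.1 ∧ 0 < D c.1 := by
    intro c hc
    rw [lC] at hc
    refine ⟨lt_of_le_of_ne (hp.1 _) ?_, lt_of_le_of_ne (hD0 _) ?_⟩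
    · intro h; apply hc; simp [← h]
    · intro h; apply hc; simp [← h]
  have hγT : γ / (K * T) ≤ 1 := (div_le_one (mul_pos hK hT0)).2 hT
  have hγT0 : 0 ≤ γ / (K * T) := (div_pos hγ (mul_pos hK hT0)).le
  have av1 : Real.log γ ≤ ∑ c, law w C c * Real.log (K * p c.1) := by
    refine avg_log hCP hγ (fun c hc => mul_pos hK (posC c hc).1) ?_
    calc ∑ c, law w C c * (γ / (K * p c.1)) ≤ ∑ c : G × Unit, γ / (K * T) * D c.1 := by
          refine Finset.sum_le_sum fun c _ => ?_
          rw [lC]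
          by_cases h : p c.1 = 0
          · rw [h]; simpa using mul_nonneg hγT0 (hD0 c.1)
          · refine le_of_eq ?_
            field_simp
      _ = γ / (K * T) := by
          rw [← Finset.mul_sum, Fintype.sum_prod_type]; simp [hDsum]
      _ ≤ 1 := hγT
  have av2 : Real.log γ ≤ ∑ c, law w C c * Real.log (K * D c.1) := by
    refine avg_log hCP hγ (fun c hc => mul_pos hK (posC c hc).2) ?_
    calc ∑ c, law w C c * (γ / (K * D c.1)) ≤ ∑ c : G × Unit, γ / (K * T) * p c.1 := by
          refine Finset.sum_le_sum fun c _ => ?_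
          rw [lC]
          by_cases h : D c.1 = 0
          · rw [h]; simpa using mul_nonneg hγT0 (hp.1 c.1)
          · refine le_of_eq ?_
            field_simp
      _ = γ / (K * T) := by
          rw [← Finset.mul_sum, Fintype.sum_prod_type]; simp [hp.2]
      _ ≤ 1 := hγT
  -- entropies
  have hW : Hh w C ≤ Real.log K - 2 * Real.log γ := by
    have h1 : Hh w C ≤ ∑ c, law w C c * (Real.log K - Real.log (K * p c.1) - Real.log (K * D c.1)) := by
      unfold Hh ent
      refine Finset.sum_le_sum fun c _ => ?_
      by_cases hc : law w C c = 0
      · simp [hc]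
      · rw [Real.negMulLog, neg_mul, ← mul_neg]
        refine mul_le_mul_of_nonneg_left ?_ (hCP.1 c)
        obtain ⟨p1, p2⟩ := posC c hc
        rw [lC, Real.log_div (mul_pos p1 p2).ne' hT0.ne', Real.log_mul p1.ne' p2.ne',
          Real.log_mul hK.ne' p1.ne', Real.log_mul hK.ne' p2.ne']
        have := Real.log_nonpos (mul_pos hK hT0).le hTK
        rw [Real.log_mul hK.ne' hT0.ne'] at this
        linarith
    simp only [mul_sub, Finset.sum_sub_distrib, ← Finset.sum_mul, hCP.2, one_mul] at h1
    linarith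
  have eW : Hh w C = Hh w (fun ω => ω.1 + ω.2) :=
    Hh_rename Prod.fst (fun a => (a, ())) (by simp [hC]) (by simp [hC])
  have eV : Hh w (fun ω => ω.2) = Hh w (fun ω => ω.1 + ω.2) := by
    let e : G × G ≃ G × G :=
      { toFun := fun ω => (ω.1, ω.1 + ω.2)
        invFun := fun ω => (ω.1, ω.1 + ω.2)
        left_inv := fun ω => by simp [cancel_l]
        right_inv := fun ω => by simp [cancel_l] }
    exact Hh_equiv e (fun ω => by
      simp only [hwdef, e, Equiv.coe_fn_mk, cancel_l]; ring) (fun ω => ω.2)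
  have eU : Hh w (fun ω => ω.1) = Hh w (fun ω => ω.1 + ω.2) := by
    rw [← eV]
    exact Hh_equiv (Equiv.prodComm G G) (fun ω => by
      simp only [hwdef, Equiv.prodComm_apply, Prod.fst_swap, Prod.snd_swap]
      rw [add_comm ω.2 ω.1]; ring) (fun ω => ω.1)
  have hj : 2 * Real.log K + Real.log γ ≤ Hh w (fun ω => (ω.1, ω.2)) := by
    have : Hh w (fun ω => (ω.1, ω.2)) = ∑ ω, w ω * (-Real.log (w ω)) := by
      have h1 := Hh_eq_log w (fun ω => ω)
      rw [law_id] at h1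
      rw [show (fun ω : G × G => (ω.1, ω.2)) = fun ω => ω from rfl, h1, ← Finset.sum_neg_distrib]
      exact Finset.sum_congr rfl fun ω _ => by ring
    rw [this]
    have h2 : ∑ ω, w ω * (2 * Real.log K + Real.log γ) ≤ ∑ ω, w ω * (-Real.log (w ω)) := by
      refine Finset.sum_le_sum fun ω _ => ?_
      by_cases h0 : w ω = 0
      · simp [h0]
      · refine mul_le_mul_of_nonneg_left ?_ (hw0 ω)
        have hpos : 0 < w ω := lt_of_le_of_ne (hw0 ω) (Ne.symm h0)
        have h3 : K * K * γ * w ω ≤ 1 := by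
          have q1 := hpK ω.1
          have q2 := hpK ω.2
          have q3 := hpK (ω.1 + ω.2)
          have r1 := mul_nonneg hK.le (hp.1 ω.1)
          have r2 := mul_nonneg hK.le (hp.1 ω.2)
          have r3 := mul_nonneg hK.le (hp.1 (ω.1 + ω.2))
          have h4 : K * K * γ * w ω = γ / (K * T) *
              ((K * p ω.1) * (K * p ω.2) * (K * p (ω.1 + ω.2))) := by
            simp only [hwdef]
            field_simp
          rw [h4]
          exact mul_le_one₀ hγT (mul_nonneg (mul_nonneg r1 r2) r3)
            (mul_le_one₀ (mul_le_one₀ q1 r2 q2) r3 q3)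
        have h5 := Real.log_nonpos (mul_pos (mul_pos (mul_pos hK hK) hγ) hpos).le h3
        rw [Real.log_mul (mul_pos (mul_pos hK hK) hγ).ne' h0, Real.log_mul (mul_pos hK hK).ne' hγ.ne',
          Real.log_mul hK.ne' hK.ne'] at h5
        linarith
    rw [← Finset.sum_mul, hw.2, one_mul] at h2
    exact h2
  have hj2 := Hh_pair_le hw (fun ω => ω.1) (fun ω => ω.2)
  have hrd := avg_rd hw (fun ω => ω.1) (fun ω => ω.2) (fun ω => ω.1 + ω.2) (fun _ => rfl) (by
    funext s
    exact (lVC s.1 s.2).trans (lUC s.1 s.2).symm)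
  have hent := sum_ent_cl hw (fun ω => ω.1) C
  have eUC : Hh w (fun ω => (ω.1, C ω)) = Hh w (fun ω => (ω.1, ω.2)) :=
    Hh_rename (fun a => (a.1, a.1 + a.2.1)) (fun a => (a.1, (a.1 + a.2, ())))
      (by intro ω; simp [hC, cancel_l]) (by intro ω; simp [hC])
  change ∑ c, law w C c * rd (cl w (fun ω => ω.1) C c) (cl w (fun ω => ω.1) C c) ≤ _ at hrd
  obtain ⟨c, hc, hF⟩ := exists_avg hCP (A := 334 * Real.log γ)
    (F := fun c => 2 * Real.log (K * D c.1) + Real.log K - ent (cl w (fun ω => ω.1) C c)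
      - 22 * rd (cl w (fun ω => ω.1) C c) (cl w (fun ω => ω.1) C c)) (by
      have : ∑ c, law w C c * (2 * Real.log (K * D c.1) + Real.log K - ent (cl w (fun ω => ω.1) C c)
          - 22 * rd (cl w (fun ω => ω.1) C c) (cl w (fun ω => ω.1) C c)) =
        2 * (∑ c, law w C c * Real.log (K * D c.1)) + (∑ c, law w C c) * Real.log K
          - (∑ c, law w C c * ent (cl w (fun ω => ω.1) C c))
          - 22 * ∑ c, law w C c * rd (cl w (fun ω => ω.1) C c) (cl w (fun ω => ω.1) C c) := by
        rw [Finset.mul_sum, Finset.mul_sum, Finset.sum_mul, ← Finset.sum_add_distrib,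
          ← Finset.sum_sub_distrib, ← Finset.sum_sub_distrib]
        exact Finset.sum_congr rfl fun c _ => by ring
      rw [this, hCP.2, hent]
      linarith)
  obtain ⟨p1, p2⟩ := posC c hc
  obtain ⟨V, a, hM, hV⟩ := pfr_cor (cl_isP hw (fun ω => ω.1) C hc)
  have hKD : 0 < K * D c.1 := mul_pos hK p2
  have hle : (∑ t, if t + a ∈ V then cl w (fun ω => ω.1) C c t else 0) ≤
      (∑ t, if t + a ∈ V then p t else 0) / (K * D c.1) := by
    rw [Finset.sum_div]
    refine Finset.sum_le_sum fun t _ => ?_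
    split_ifs
    · simp only [cl]
      rw [lUC, lC, div_div_div_cancel_right₀ hT0.ne', div_le_div_iff₀ (mul_pos p1 p2) hKD]
      have h1 := hpK (t + c.1)
      have h2 : 0 ≤ p t * p c.1 * D c.1 := mul_nonneg (mul_nonneg (hp.1 _) p1.le) p2.le
      nlinarith
    · simp
  have hm : 0 < ∑ t, if t + a ∈ V then p t else 0 := by
    by_contra hcon
    push Not at hcon
    have := div_nonpos_of_nonpos_of_nonneg hcon hKD.le
    linarith
  refine ⟨V, a, hm, ?_⟩
  have hlog := Real.log_le_log hM hle
  rw [Real.log_div hm.ne' hKD.ne'] at hlog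
  linarith

end Main

open scoped Classical in
/-- inverse theorem for the second moment of Weyl-operator
expectations under the Weyl distribution. -/
theorem stmt_15 :
    ∃ c : ℝ, 0 < c ∧
      ∀ n : ℕ, 1 ≤ n → ∀ γ : ℝ, γ ∈ Set.Ioc (0 : ℝ) 1 →
        ∀ f : (Fin n → ZMod 2) → ℂ, (∑ x : Fin n → ZMod 2, ‖f x‖ ^ 2 = 1) →
          (∑ x : (Fin n → ZMod 2) × (Fin n → ZMod 2),
              weylDist n f x * ((2 : ℝ) ^ n * charDist n f x)) ≥ γ →
          ∃ L : Submodule (ZMod 2) ((Fin n → ZMod 2) × (Fin n → ZMod 2)),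
            IsLagrangian n L ∧
            c * γ ^ (1089 : ℕ) ≤
              ∑ x : L, charDist n f (x : (Fin n → ZMod 2) × (Fin n → ZMod 2)) := by
  refine ⟨1, one_pos, ?_⟩
  intro n _ γ hγ f hf hyp
  have hK : (0:ℝ) < 2 ^ n := by positivity
  have hT : γ ≤ 2 ^ n * ∑ x, ∑ y, charDist n f x * charDist n f y * charDist n f (x + y) := by
    refine hyp.le.trans (le_of_eq ?_)
    rw [Finset.mul_sum]
    refine Finset.sum_congr rfl fun x _ => ?_
    rw [weylDist, Finset.sum_mul, Finset.mul_sum]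
    exact Finset.sum_congr rfl fun y _ => by ring
  obtain ⟨V, a, hm, hlog⟩ := combin (cd_isP hf) hK (cd_le hf) hγ.1 hT
  obtain ⟨L, hL, hq⟩ := quantum hf V a
  refine ⟨L, hL, ?_⟩
  have hV : (0:ℝ) < Nat.card V := by exact_mod_cast Nat.card_pos
  set m := ∑ t, if t + a ∈ V then charDist n f t else 0 with hmdef
  have e : Real.log (m ^ 2 * 2 ^ n / Nat.card V) =
      2 * Real.log m + Real.log (2 ^ n) - Real.log (Nat.card V) := by
    rw [Real.log_div (by positivity) hV.ne', Real.log_mul (by positivity) hK.ne', Real.log_pow]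
    norm_num
  have h1 : γ ^ 334 ≤ m ^ 2 * 2 ^ n / Nat.card V := by
    refine (Real.log_le_log_iff (pow_pos hγ.1 _) (by positivity)).1 ?_
    rw [e, Real.log_pow]
    exact_mod_cast hlog
  have h2 : γ ^ 1089 ≤ γ ^ 334 := pow_le_pow_of_le_one hγ.1.le hγ.2 (by norm_num)
  have h3 := sv_eq_sum L (charDist n f)
  rw [one_mul]
  calc γ ^ 1089 ≤ sv L (charDist n f) := h2.trans (h1.trans hq)
    _ = _ := by rw [h3]
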